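/- arXiv:1608.03823 — 6 statements merged into one kernel-verified Lean document; each statement's English description precedes it below -/
import Mathlib

section
/- For every natural number n ≥ 1 there exists a finite geometric simplicial complex K_n in ℝ³ such that: (i) the union of the simplices of K_n is the unit cube [0,1]³; (ii) the vertex set of K_n is exactly the grid {(i/(2n), j/(2n), k/(2n)) : 0 ≤ i, j, k ≤ 2n} (so K_n has (2n+1)³ vertices); (iii) K_n has exactly 5·(2n)³ three-dimensional simplices; (iv) every simplex of K_n has diameter at most 1/(n·√2); and (v) for each coordinate l ∈ {1,2,3}, translation by the standard basis vector e_l maps the set of simplices of K_n contained in the face {x ∈ [0,1]³ : x_l = 0} bijectively onto the set of simplices of K_n contained in the opposite face {x ∈ [0,1]³ : x_l = 1}. (This is the combinatorial content of the paper's Theorem on the 3-torus: identifying opposite faces yields a triangulation of T³ = ℝ³/ℤ³ with 8n³ vertices and 40n³ tetrahedra.) -/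
open scoped Classical

/-- The point `(a, b, c)` of Euclidean 3-space. -/
noncomputable def pt3 (a b c : ℝ) : EuclideanSpace ℝ (Fin 3) :=
  (WithLp.equiv 2 (Fin 3 → ℝ)).symm ![a, b, c]

/-- The unit cube `[0,1]³` in Euclidean 3-space. -/
def unitCube : Set (EuclideanSpace ℝ (Fin 3)) :=
  {x | ∀ i : Fin 3, x i ∈ Set.Icc (0 : ℝ) 1}

/-!
Each cell of the grid is cut into five tetrahedra: a central one on its four vertices of even
coordinate sum, and a corner at each odd vertex. Parity is that of the whole grid, so neighbouring
cells induce the same diagonal on their common square.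

That the pieces fit together rests on one separation property: for faces `s`, `t` and a vertex `p`
of `s` there is a hyperplane with `s` on one side, `p` strictly so, and `t \ {p}` on the other. It
forces the weight at `p` of a point common to both simplices to vanish when `p ∉ t`, and for `s = t`
it gives affine independence. If `p` is not a vertex of the cell of `t`, a coordinate hyperplane
separates. Otherwise the `ℓ¹` distance to `p` is affine on that cell, and the affine function
extending it is at most the distance everywhere; one cuts at distance `1` if `p` is odd, and at
distance `2` if `p` is even and `t` contains no neighbour of `p`. If `p` is even with a neighbour
`q ∈ t`, then `q` is odd, `t` consists of `q` and neighbours of `q`, and the coordinate hyperplane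
through `q` separates.

Sign changes followed by translations of even coordinate sum preserve the pattern, so counting and
covering reduce to the unit cell, and opposite faces of the cube agree because the number `2n` of
cells along an edge is even.
-/

section Separation

open Finset

variable {𝕜 E : Type*} [Field 𝕜] [LinearOrder 𝕜] [IsStrictOrderedRing 𝕜]
  [AddCommGroup E] [Module 𝕜 E]

/-- A hyperplane `f = a` has the finite set `s` on its lower side, with `p` strictly below, and all
of `t` except possibly `p` on its upper side. The scalars may be any ordered ring, so that the same
notion serves for the lattice `ι → ℤ` and for real vector spaces. -/
def IsSeparatedAt (R : Type*) {M : Type*} [Ring R] [LinearOrder R] [AddCommGroup M] [Module R M]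
    (p : M) (s t : Finset M) : Prop :=
  ∃ (f : M →ₗ[R] R) (a : R), f p < a ∧ (∀ x ∈ s, f x ≤ a) ∧ ∀ x ∈ t, x ≠ p → a ≤ f x

lemma affineIndependent_of_isSeparatedAt {s : Finset E}
    (hs : ∀ p ∈ s, IsSeparatedAt 𝕜 p s s) : AffineIndependent 𝕜 ((↑) : s → E) := by
  rw [affineIndependent_iff]
  intro u w hw hwx p hp
  obtain ⟨f, a, hpa, hle, hge⟩ := hs p p.2
  have hsum : ∑ x ∈ u, w x * (f x - a) = 0 := by
    have hf := congrArg f hwx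
    simp only [map_sum, map_smul, smul_eq_mul, map_zero] at hf
    simp only [mul_sub, sum_sub_distrib, hf, ← sum_mul, hw, zero_mul, sub_zero]
  have hother : ∀ x ∈ u, x ≠ p → w x * (f x - a) = 0 := fun x _ hxp => by
    rw [(hle x x.2).antisymm (hge x x.2 (Subtype.coe_ne_coe.2 hxp)), sub_self, mul_zero]
  rw [sum_eq_single_of_mem p hp hother] at hsum
  exact (mul_eq_zero.1 hsum).resolve_right (sub_neg.2 hpa).ne

lemma convexHull_inter_subset_of_isSeparatedAt {s t : Finset E}
    (hst : ∀ p ∈ s, p ∉ t → IsSeparatedAt 𝕜 p s t) :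
    convexHull 𝕜 (s : Set E) ∩ convexHull 𝕜 (t : Set E) ⊆ convexHull 𝕜 (s ∩ t : Set E) := by
  rintro x ⟨hxs, hxt⟩
  obtain ⟨w, hw₀, hw₁, rfl⟩ := Finset.mem_convexHull'.1 hxs
  have hzero : ∀ p ∈ s, p ∉ t → w p = 0 := fun p hps hpt => by
    obtain ⟨f, a, hpa, hle, hge⟩ := hst p hps hpt
    have hax : a ≤ f (∑ y ∈ s, w y • y) :=
      convexHull_min (fun y hy => hge y hy (ne_of_mem_of_not_mem hy hpt))
        (convex_halfSpace_ge f.isLinear a) hxt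
    have hnonneg : ∀ y ∈ s, 0 ≤ w y * (a - f y) := fun y hy =>
      mul_nonneg (hw₀ y hy) (sub_nonneg.2 (hle y hy))
    have hsum : ∑ y ∈ s, w y * (a - f y) = a - f (∑ y ∈ s, w y • y) := by
      simp only [mul_sub, sum_sub_distrib, ← sum_mul, hw₁, one_mul, map_sum, map_smul, smul_eq_mul]
    have hsum_zero : ∑ y ∈ s, w y * (a - f y) = 0 :=
      (hsum.trans_le (sub_nonpos.2 hax)).antisymm (sum_nonneg hnonneg)
    have hp := (sum_eq_zero_iff_of_nonneg hnonneg).1 hsum_zero p hps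
    exact (mul_eq_zero.1 hp).resolve_right (sub_pos.2 hpa).ne'
  have hsupport : ∀ y ∈ s, y ∉ s ∩ t → w y = 0 := fun y hys hy =>
    hzero y hys fun hyt => hy (mem_inter.2 ⟨hys, hyt⟩)
  rw [← sum_subset inter_subset_left fun y hys hy => by rw [hsupport y hys hy, zero_smul]]
  rw [← sum_subset inter_subset_left hsupport] at hw₁
  rw [← coe_inter, Finset.mem_convexHull']
  exact ⟨w, fun y hy => hw₀ y (mem_inter.1 hy).1, hw₁, rfl⟩

/-- The geometric simplicial complex on a family of finite sets closed under nonempty subsets in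
which any two members are separated at every vertex of the first. -/
def complexOfSeparated (F : Set (Finset E)) (hF : IsRelLowerSet F Finset.Nonempty)
    (hsep : ∀ s ∈ F, ∀ t ∈ F, ∀ p ∈ s, IsSeparatedAt 𝕜 p s t) :
    Geometry.SimplicialComplex 𝕜 E where
  faces := F
  isRelLowerSet_faces := hF
  indep hs := affineIndependent_of_isSeparatedAt (hsep _ hs _ hs)
  inter_subset_convexHull hs ht :=
    convexHull_inter_subset_of_isSeparatedAt fun p hp _ => hsep _ hs _ ht p hp

end Separation

section Lattice

open Finset

variable {ι : Type*}

/-- The closed unit cell of the lattice `ι → ℤ` with least vertex `c`. -/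
def cell (c : ι → ℤ) : Set (ι → ℤ) := Set.Icc c (c + 1)

lemma mem_cell {c v : ι → ℤ} : v ∈ cell c ↔ ∀ i, c i ≤ v i ∧ v i ≤ c i + 1 := by
  simp only [cell, Set.mem_Icc, Pi.le_def, Pi.add_apply, Pi.one_apply, forall_and]

variable {s t : Finset (ι → ℤ)} {c d p : ι → ℤ}

lemma isSeparatedAt_of_notMem_cell (hs : ↑s ⊆ cell c) (ht : ↑t ⊆ cell d) (hps : p ∈ s)
    (hpd : p ∉ cell d) : IsSeparatedAt ℤ p s t := by
  rw [mem_cell, not_forall] at hpd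
  obtain ⟨i, hi⟩ := hpd
  have hpc := mem_cell.1 (hs hps) i
  have hsc v (hv : v ∈ s) := mem_cell.1 (hs hv) i
  have htd v (hv : v ∈ t) := mem_cell.1 (ht hv) i
  rcases (by lia : p i < d i ∨ d i + 1 < p i) with hlt | hgt
  · exact ⟨.proj i, p i + 1, by simp,
      fun v hv => by grind [LinearMap.proj_apply], fun v hv _ => by grind [LinearMap.proj_apply]⟩
  · exact ⟨-.proj i, -p i + 1, by simp,
      fun v hv => by grind [LinearMap.neg_apply, LinearMap.proj_apply],
      fun v hv _ => by grind [LinearMap.neg_apply, LinearMap.proj_apply]⟩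

/-- The symmetry `v ↦ p + σ v` of the lattice, a choice of signs followed by a translation. -/
def signedShift (p : ι → ℤ) (σ : ι → ℤˣ) : (ι → ℤ) ≃ (ι → ℤ) where
  toFun v i := p i + σ i * v i
  invFun v i := σ i * (v i - p i)
  left_inv v := by simp [← mul_assoc, Int.units_coe_mul_self]
  right_inv v := by simp [← mul_assoc, Int.units_coe_mul_self]

lemma signedShift_apply (p : ι → ℤ) (σ : ι → ℤˣ) (v : ι → ℤ) (i : ι) :
    signedShift p σ v i = p i + σ i * v i := rfl

/-- The vertex `p` of the cell with least vertex `c`, with the signs `σ` of the coordinate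
directions that lead from `p` into the cell. -/
def IsCellCorner (c p : ι → ℤ) (σ : ι → ℤˣ) : Prop :=
  ∀ i, p i = c i ∧ σ i = 1 ∨ p i = c i + 1 ∧ σ i = -1

lemma IsCellCorner.signedShift_mem_cell_iff {σ : ι → ℤˣ} (h : IsCellCorner c p σ) {v : ι → ℤ} :
    signedShift p σ v ∈ cell c ↔ v ∈ cell 0 := by
  simp only [mem_cell, signedShift_apply, Pi.zero_apply]
  refine forall_congr' fun i => ?_
  rcases h i with ⟨hp, hσ⟩ | ⟨hp, hσ⟩ <;> rw [hp, hσ] <;> push_cast <;> lia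

variable [Fintype ι]

/-- The `ℓ¹` distance on the lattice `ι → ℤ`, as an integer. -/
def l1Dist (v w : ι → ℤ) : ℤ := ∑ i, |v i - w i|

lemma l1Dist_comm (v w : ι → ℤ) : l1Dist v w = l1Dist w v :=
  sum_congr rfl fun i _ => abs_sub_comm (v i) (w i)

lemma abs_sub_le_l1Dist (v w : ι → ℤ) (i : ι) : |v i - w i| ≤ l1Dist v w :=
  single_le_sum (f := fun i => |v i - w i|) (fun _ _ => abs_nonneg _) (mem_univ i)

lemma l1Dist_pos {v w : ι → ℤ} (h : v ≠ w) : 0 < l1Dist v w := by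
  obtain ⟨i, hi⟩ := Function.ne_iff.1 h
  exact (abs_pos.2 (sub_ne_zero.2 hi)).trans_le (abs_sub_le_l1Dist v w i)

lemma eq_of_l1Dist_le_one {v w : ι → ℤ} (h : l1Dist v w ≤ 1) {i j : ι} (hi : v i ≠ w i)
    (hji : j ≠ i) : v j = w j := by
  have hle : |v i - w i| + |v j - w j| ≤ l1Dist v w := by
    rw [← sum_pair (f := fun k => |v k - w k|) hji.symm]
    exact sum_le_sum_of_subset_of_nonneg (subset_univ _) fun _ _ _ => abs_nonneg _
  have hpos : 0 < |v i - w i| := abs_pos.2 (sub_ne_zero.2 hi)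
  exact sub_eq_zero.1 (abs_nonpos_iff.1 (by linarith))

lemma even_l1Dist_iff (v w : ι → ℤ) :
    Even (l1Dist v w) ↔ (Even (∑ i, v i) ↔ Even (∑ i, w i)) := by
  have habs : Even (l1Dist v w - (∑ i, v i - ∑ i, w i)) := by
    rw [l1Dist, ← sum_sub_distrib, ← sum_sub_distrib]
    exact even_sum _ fun i _ => Int.even_sub.2 even_abs
  rw [Int.even_sub.1 habs, Int.even_sub]

/-- The sets of vertices of a unit cell of the lattice that span a simplex: two vertices are never
further apart than the diagonal of a square, and only the even ones can be that far apart. In a unit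
cell of `ℤ³` the maximal ones are the tetrahedron on the four even vertices and the four corners
cut off by it, each made of an odd vertex and its three neighbours. -/
def IsCheckerboard (s : Finset (ι → ℤ)) : Prop :=
  ∀ v ∈ s, ∀ w ∈ s, l1Dist v w ≤ 2 ∧ (Odd (∑ i, v i) → l1Dist v w ≤ 1)

lemma IsCheckerboard.mono (ht : IsCheckerboard t) (hst : s ⊆ t) :
    IsCheckerboard s :=
  fun v hv w hw => ht v (hst hv) w (hst hw)

lemma exists_linearMap_eq_l1Dist (hp : p ∈ cell d) : ∃ f : (ι → ℤ) →ₗ[ℤ] ℤ,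
    (∀ v, f v - f p ≤ l1Dist v p) ∧ ∀ v ∈ cell d, f v - f p = l1Dist v p := by
  let σ : ι → ℤ := fun i => if p i = d i then 1 else -1
  let f : (ι → ℤ) →ₗ[ℤ] ℤ := ∑ i, σ i • .proj i
  have hf v : f v - f p = ∑ i, σ i * (v i - p i) := by
    simp only [f, LinearMap.sum_apply, LinearMap.smul_apply, LinearMap.proj_apply, smul_eq_mul,
      ← sum_sub_distrib, mul_sub]
  refine ⟨f, fun v => ?_, fun v hv => ?_⟩ <;> rw [hf]
  · exact sum_le_sum fun i _ => by grind
  · exact sum_congr rfl fun i _ => by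
      have hpi := mem_cell.1 hp i
      have hvi := mem_cell.1 hv i
      grind

lemma isSeparatedAt_of_l1Dist {r : ℤ} (hr : 0 < r) (ht : ↑t ⊆ cell d) (hp : p ∈ cell d)
    (hs : ∀ v ∈ s, l1Dist v p ≤ r) (hfar : ∀ v ∈ t, v ≠ p → r ≤ l1Dist v p) :
    IsSeparatedAt ℤ p s t := by
  obtain ⟨f, hle, heq⟩ := exists_linearMap_eq_l1Dist hp
  refine ⟨f, f p + r, by lia, fun v hv => ?_, fun v hv hvp => ?_⟩
  · linarith [hle v, hs v hv]
  · linarith [heq v (ht hv), hfar v hv hvp]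

lemma isSeparatedAt_of_neighbor {q : ι → ℤ} (hs : ↑s ⊆ cell c) (hps : p ∈ s) (ht : ↑t ⊆ cell d)
    (hp : p ∈ cell d) (hqt : q ∈ t) (hqp : l1Dist q p = 1) (hq : ∀ v ∈ t, l1Dist q v ≤ 1) :
    IsSeparatedAt ℤ p s t := by
  have hne : q ≠ p := by
    rintro rfl
    simp [l1Dist] at hqp
  obtain ⟨i, hi⟩ := Function.ne_iff.1 hne
  have hcell v (hv : v ∈ cell d) := mem_cell.1 hv i
  have hpi := hcell p hp
  have hqi := hcell q (ht hqt)
  have hti : ∀ v ∈ t, v ≠ p → v i = q i := fun v hv hvp => by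
    by_contra hvi
    refine hvp (funext fun j => ?_)
    rcases eq_or_ne j i with rfl | hji
    · have := hcell v (ht hv)
      lia
    · rw [← eq_of_l1Dist_le_one hqp.le hi hji, eq_of_l1Dist_le_one (hq v hv) (Ne.symm hvi) hji]
  have hsi v (hv : v ∈ s) := mem_cell.1 (hs hv) i
  have hpc := hsi p hps
  rcases (by lia : q i = p i + 1 ∨ q i = p i - 1) with hqi | hqi
  · exact ⟨.proj i, q i, by simp [hqi], fun v hv => by grind [LinearMap.proj_apply],
      fun v hv hvp => (hti v hv hvp).ge⟩
  · exact ⟨-.proj i, -q i, by simp [hqi],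
      fun v hv => by grind [LinearMap.neg_apply, LinearMap.proj_apply],
      fun v hv hvp => (neg_inj.2 (hti v hv hvp)).ge⟩

lemma IsCheckerboard.isSeparatedAt (hs : IsCheckerboard s) (ht : IsCheckerboard t)
    (hsc : ↑s ⊆ cell c) (htd : ↑t ⊆ cell d) (hps : p ∈ s) : IsSeparatedAt ℤ p s t := by
  by_cases hp : p ∈ cell d
  swap
  · exact isSeparatedAt_of_notMem_cell hsc htd hps hp
  rcases Int.even_or_odd (∑ i, p i) with heven | hodd
  swap
  · exact isSeparatedAt_of_l1Dist one_pos htd hp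
      (fun v hv => l1Dist_comm v p ▸ (hs p hps v hv).2 hodd) fun v _ hvp => l1Dist_pos hvp
  by_cases hnear : ∃ q ∈ t, l1Dist q p = 1
  · obtain ⟨q, hqt, hqp⟩ := hnear
    have hqodd : Odd (∑ i, q i) := by
      have hpar := even_l1Dist_iff q p
      rw [hqp] at hpar
      rw [← Int.not_even_iff_odd]
      exact fun hq => Int.not_even_one (hpar.2 (iff_of_true hq heven))
    exact isSeparatedAt_of_neighbor hsc hps htd hp hqt hqp fun v hv => (ht q hqt v hv).2 hqodd
  · push Not at hnear
    refine isSeparatedAt_of_l1Dist two_pos htd hp (fun v hv => (hs v hv p hps).1)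
      fun v hv hvp => ?_
    have hpos := l1Dist_pos hvp
    have hne := hnear v hv
    lia

lemma l1Dist_signedShift (p : ι → ℤ) (σ : ι → ℤˣ) (v w : ι → ℤ) :
    l1Dist (signedShift p σ v) (signedShift p σ w) = l1Dist v w :=
  sum_congr rfl fun i _ => by
    rw [signedShift_apply, signedShift_apply, add_sub_add_left_eq_sub, ← mul_sub, abs_mul,
      Int.isUnit_iff_abs_eq.1 (σ i).isUnit, one_mul]

lemma even_sum_signedShift_iff {σ : ι → ℤˣ} (hp : Even (∑ i, p i)) (v : ι → ℤ) :
    Even (∑ i, signedShift p σ v i) ↔ Even (∑ i, v i) := by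
  have hdiff : Even (∑ i, (σ i * v i - v i : ℤ)) := even_sum _ fun i _ => by
    rcases Int.units_eq_one_or (σ i) with hσ | hσ <;> simp [hσ, Int.even_sub]
  rw [sum_sub_distrib, Int.even_sub] at hdiff
  simp only [signedShift_apply, sum_add_distrib, Int.even_add, hp, true_iff, hdiff]

lemma isCheckerboard_map_signedShift_iff {σ : ι → ℤˣ} (hp : Even (∑ i, p i)) :
    IsCheckerboard (s.map (signedShift p σ).toEmbedding) ↔ IsCheckerboard s := by
  simp only [IsCheckerboard, forall_mem_map, Equiv.coe_toEmbedding, l1Dist_signedShift,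
    ← Int.not_even_iff_odd, even_sum_signedShift_iff hp]

lemma exists_isCellCorner_even [Nonempty ι] (c : ι → ℤ) :
    ∃ p σ, IsCellCorner c p σ ∧ Even (∑ i, p i) := by
  rcases Int.even_or_odd (∑ i, c i) with heven | hodd
  · exact ⟨c, 1, fun i => .inl ⟨rfl, rfl⟩, heven⟩
  · let l : ι := Classical.arbitrary ι
    refine ⟨c + Pi.single l 1, Function.update 1 l (-1), fun i => ?_, ?_⟩
    · rcases eq_or_ne i l with rfl | hil
      · simp
      · simp [hil]
    · simpa only [Pi.add_apply, sum_add_distrib, sum_pi_single', mem_univ, if_true]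
        using hodd.add_one

end Lattice

section GridComplex

open Finset

variable {ι : Type*}

/-- The point of the grid of mesh `1 / N` with integer coordinates `v`. For `N = 0` it is the junk
value `0`. -/
noncomputable def gridPoint (N : ℕ) (v : ι → ℤ) : EuclideanSpace ℝ ι :=
  WithLp.toLp 2 fun i => (v i : ℝ) / N

lemma gridPoint_apply (N : ℕ) (v : ι → ℤ) (i : ι) : gridPoint N v i = (v i : ℝ) / N := rfl

lemma gridPoint_injective {N : ℕ} (hN : N ≠ 0) :
    Function.Injective (gridPoint N : (ι → ℤ) → EuclideanSpace ℝ ι) := fun v w h => by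
  funext i
  have hi : (v i : ℝ) / N = w i / N := congrArg (fun x : EuclideanSpace ℝ ι => x i) h
  exact_mod_cast (div_left_inj' (Nat.cast_ne_zero.2 hN)).1 hi

lemma gridPoint_apply_eq_intCast_iff {N : ℕ} (hN : N ≠ 0) {v : ι → ℤ} {i : ι} {a : ℤ} :
    gridPoint N v i = a ↔ v i = a * N := by
  rw [gridPoint_apply, div_eq_iff (Nat.cast_ne_zero.2 hN), ← Int.cast_natCast, ← Int.cast_mul,
    Int.cast_inj]

lemma gridPoint_signedShift_single [DecidableEq ι] {N : ℕ} (hN : N ≠ 0) (v : ι → ℤ) (l : ι)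
    (a : ℤ) : gridPoint N (signedShift (Pi.single l (a * N)) 1 v) =
      gridPoint N v + EuclideanSpace.single l (a : ℝ) := by
  have hN' : (N : ℝ) ≠ 0 := Nat.cast_ne_zero.2 hN
  ext i
  rcases eq_or_ne i l with rfl | hil
  · simp [gridPoint_apply, signedShift_apply, add_div, hN', add_comm]
  · simp [gridPoint_apply, signedShift_apply, hil]

variable [Fintype ι]

lemma IsSeparatedAt.image_gridPoint {N : ℕ} (hN : N ≠ 0) {p : ι → ℤ} {s t : Finset (ι → ℤ)}
    (h : IsSeparatedAt ℤ p s t) :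
    IsSeparatedAt ℝ (gridPoint N p) (s.image (gridPoint N)) (t.image (gridPoint N)) := by
  obtain ⟨f, a, hpa, hle, hge⟩ := h
  let F : EuclideanSpace ℝ ι →ₗ[ℝ] ℝ :=
    ∑ i, (f fun j => if i = j then 1 else 0 : ℝ) • (EuclideanSpace.proj i).toLinearMap
  have hF v : F (gridPoint N v) = f v / N := by
    rw [f.pi_apply_eq_sum_univ v]
    simp [F, gridPoint_apply, sum_div, mul_div_right_comm, mul_comm]
  have hN' : (0 : ℝ) < N := Nat.cast_pos.2 (Nat.pos_of_ne_zero hN)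
  have hdiv {b c : ℤ} (hbc : b ≤ c) : (b : ℝ) / N ≤ c / N := by gcongr
  refine ⟨F, a / N, by rw [hF]; exact div_lt_div_of_pos_right (Int.cast_lt.2 hpa) hN',
    forall_mem_image.2 fun v hv => ?_, forall_mem_image.2 fun v hv hvp => ?_⟩ <;> rw [hF]
  · exact hdiv (hle v hv)
  · exact hdiv (hge v hv (ne_of_apply_ne _ hvp))

/-- The faces of the checkerboard triangulation of the box `[0, N] ^ ι`, as sets of lattice
points. -/
structure IsGridFace (N : ℕ) (s : Finset (ι → ℤ)) : Prop where
  nonempty : s.Nonempty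
  isCheckerboard : IsCheckerboard s
  exists_cell : ∃ c ∈ Set.Icc (0 : ι → ℤ) (N - 1), ↑s ⊆ cell c

namespace IsGridFace

variable {N : ℕ} {s t : Finset (ι → ℤ)}

lemma mono (ht : IsGridFace N t) (hst : s ⊆ t) (hs : s.Nonempty) : IsGridFace N s :=
  have ⟨c, hc, htc⟩ := ht.exists_cell
  ⟨hs, ht.isCheckerboard.mono hst, c, hc, (coe_subset.2 hst).trans htc⟩

lemma ne_zero [Nonempty ι] (hs : IsGridFace N s) : N ≠ 0 := by
  rintro rfl
  obtain ⟨c, hc, -⟩ := hs.exists_cell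
  have i : ι := Classical.arbitrary ι
  simpa using (hc.1.trans hc.2) i

lemma isSeparatedAt (hs : IsGridFace N s) (ht : IsGridFace N t) {p : ι → ℤ} (hp : p ∈ s) :
    IsSeparatedAt ℤ p s t := by
  obtain ⟨c, -, hsc⟩ := hs.exists_cell
  obtain ⟨d, -, htd⟩ := ht.exists_cell
  exact hs.isCheckerboard.isSeparatedAt ht.isCheckerboard hsc htd hp

lemma subset_Icc (hs : IsGridFace N s) : ↑s ⊆ Set.Icc (0 : ι → ℤ) N := fun v hv => by
  obtain ⟨c, hc, hsc⟩ := hs.exists_cell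
  exact ⟨hc.1.trans (hsc hv).1, (hsc hv).2.trans (le_sub_iff_add_le.1 hc.2)⟩

lemma singleton (hN : N ≠ 0) {v : ι → ℤ} (hv : v ∈ Set.Icc 0 (N : ι → ℤ)) :
    IsGridFace N {v} := by
  have hN' : (0 : ι → ℤ) ≤ N - 1 := fun _ => show (0 : ℤ) ≤ N - 1 by lia
  have hcell : v ∈ cell (v ⊓ (N - 1)) := mem_cell.2 fun i => by
    have hvi : v i ≤ N := hv.2 i
    change min (v i) (N - 1 : ℤ) ≤ v i ∧ v i ≤ min (v i) (N - 1 : ℤ) + 1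
    lia
  exact ⟨singleton_nonempty v, by simp [IsCheckerboard, l1Dist], v ⊓ (N - 1),
    ⟨le_inf hv.1 hN', inf_le_right⟩, by simpa using hcell⟩

lemma map_signedShift_single [DecidableEq ι] (hs : IsGridFace N s) {l : ι} {a k : ℤ}
    (ha : ∀ v ∈ s, v l = a) (hk : Even k) (hak : a + k ∈ Set.Icc 0 (N : ℤ)) :
    IsGridFace N (s.map (signedShift (Pi.single l k) 1).toEmbedding) := by
  obtain ⟨c, ⟨hc₀, hcN⟩, hsc⟩ := hs.exists_cell
  have : Nonempty ι := ⟨l⟩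
  have hN : (1 : ℤ) ≤ N := by exact_mod_cast Nat.one_le_iff_ne_zero.2 hs.ne_zero
  refine ⟨hs.nonempty.map, (isCheckerboard_map_signedShift_iff (by simpa)).2 hs.isCheckerboard,
    Function.update c l (min (a + k) (N - 1)), ⟨?_, ?_⟩, ?_⟩
  · exact le_update_iff.2 ⟨le_min hak.1 (by simpa using hN), fun i _ => hc₀ i⟩
  · exact update_le_iff.2 ⟨min_le_right _ _, fun i _ => hcN i⟩
  · rw [coe_map, Set.image_subset_iff]
    intro v hv
    refine mem_cell.2 fun i => ?_
    simp only [Equiv.coe_toEmbedding, signedShift_apply, Pi.one_apply, Units.val_one, one_mul]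
    rcases eq_or_ne i l with rfl | hil
    · rw [Pi.single_eq_same, Function.update_self, ha v hv]
      have := hak.2
      lia
    · simpa [hil] using mem_cell.1 (hsc hv) i

end IsGridFace

variable {N : ℕ}

lemma dist_gridPoint {c v w : ι → ℤ} (hv : v ∈ cell c) (hw : w ∈ cell c) :
    dist (gridPoint N v) (gridPoint N w) = √(l1Dist v w) / N := by
  have hcoord i : dist (gridPoint N v i) (gridPoint N w i) ^ 2 = (|v i - w i| : ℤ) / N ^ 2 := by
    have hsq : (v i - w i) ^ 2 = |v i - w i| := by
      have hvi := mem_cell.1 hv i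
      have hwi := mem_cell.1 hw i
      rcases (by lia : v i - w i = 0 ∨ v i - w i = 1 ∨ v i - w i = -1) with h | h | h <;> simp [h]
    rw [gridPoint_apply, gridPoint_apply, Real.dist_eq, sq_abs, ← sub_div, div_pow, ← hsq]
    push_cast
    rfl
  rw [EuclideanSpace.dist_eq, sum_congr rfl fun i _ => hcoord i, ← sum_div, ← Int.cast_sum,
    ← l1Dist, Real.sqrt_div' _ (sq_nonneg _), Real.sqrt_sq (Nat.cast_nonneg N)]

variable [Nonempty ι]

variable (ι N) in
/-- The checkerboard triangulation of `[0, 1] ^ ι` with mesh `1 / N`. For three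
coordinates it fills the cube; for `N = 0` it is empty. -/
noncomputable def gridComplex : Geometry.SimplicialComplex ℝ (EuclideanSpace ℝ ι) :=
  complexOfSeparated (image (gridPoint N) '' {s | IsGridFace N s})
    (by
      rintro _ ⟨s, hs, rfl⟩
      refine ⟨hs.nonempty.image _, fun T hT hTne => ?_⟩
      obtain ⟨t, hts, rfl⟩ := subset_image_iff.1 hT
      exact ⟨t, hs.mono hts hTne.of_image, rfl⟩)
    (by
      rintro _ ⟨s, hs, rfl⟩ _ ⟨t, ht, rfl⟩
      exact forall_mem_image.2 fun v hv => (hs.isSeparatedAt ht hv).image_gridPoint hs.ne_zero)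

lemma mem_faces_gridComplex {S : Finset (EuclideanSpace ℝ ι)} :
    S ∈ (gridComplex ι N).faces ↔ ∃ s, IsGridFace N s ∧ s.image (gridPoint N) = S := Iff.rfl

lemma finite_faces_gridComplex : (gridComplex ι N).faces.Finite := by
  refine ((Icc (0 : ι → ℤ) N).powerset.finite_toSet.subset fun s hs => ?_).image _
  rw [mem_coe, mem_powerset, ← coe_subset, coe_Icc]
  exact IsGridFace.subset_Icc hs

lemma vertices_gridComplex (hN : N ≠ 0) :
    (gridComplex ι N).vertices = gridPoint N '' Set.Icc (0 : ι → ℤ) N := by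
  rw [Geometry.SimplicialComplex.vertices_eq]
  refine (Set.iUnion₂_subset ?_).antisymm ?_
  · rintro _ ⟨s, hs, rfl⟩
    rw [coe_image]
    exact Set.image_mono hs.subset_Icc
  · rintro _ ⟨v, hv, rfl⟩
    exact Set.mem_biUnion ⟨{v}, .singleton hN hv, rfl⟩ (by simp)

lemma ncard_vertices_gridComplex (hN : N ≠ 0) :
    (gridComplex ι N).vertices.ncard = (N + 1) ^ Fintype.card ι := by
  rw [vertices_gridComplex hN, Set.ncard_image_of_injective _ (gridPoint_injective hN),
    ← coe_Icc, Set.ncard_coe_finset, Pi.card_Icc]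
  simp

lemma diam_convexHull_le_of_mem_faces_gridComplex {S : Finset (EuclideanSpace ℝ ι)}
    (hS : S ∈ (gridComplex ι N).faces) :
    Metric.diam (convexHull ℝ (S : Set (EuclideanSpace ℝ ι))) ≤ √2 / N := by
  obtain ⟨s, hs, rfl⟩ := hS
  obtain ⟨c, -, hsc⟩ := hs.exists_cell
  rw [convexHull_diam]
  refine Metric.diam_le_of_forall_dist_le (by positivity) ?_
  simp only [mem_coe, forall_mem_image]
  intro v hv w hw
  rw [dist_gridPoint (hsc hv) (hsc hw)]
  gcongr
  exact_mod_cast (hs.isCheckerboard v hv w hw).1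

section Translation

variable [DecidableEq ι]

lemma mapsTo_image_add_single (hN : Even N) (l : ι) {a b δ : ℤ} (hb : a + δ = b)
    (hb₀ : 0 ≤ b) (hb₁ : b ≤ 1) :
    Set.MapsTo (image (· + EuclideanSpace.single l (δ : ℝ)))
      {S | S ∈ (gridComplex ι N).faces ∧ ∀ x ∈ S, x l = a}
      {S | S ∈ (gridComplex ι N).faces ∧ ∀ x ∈ S, x l = b} := by
  rintro _ ⟨⟨s, hs, rfl⟩, ha⟩
  have hN₀ := hs.ne_zero
  rw [forall_mem_image] at ha
  have hal : ∀ v ∈ s, v l = a * N := fun v hv => (gridPoint_apply_eq_intCast_iff hN₀).1 (ha hv)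
  refine ⟨⟨_, hs.map_signedShift_single hal ((Int.even_coe_nat N).2 hN |>.mul_left δ) ?_, ?_⟩, ?_⟩
  · rw [← add_mul, hb]
    exact ⟨by positivity, mul_le_of_le_one_left (by positivity) hb₁⟩
  · simp only [map_eq_image, image_image, Function.comp_def, Equiv.coe_toEmbedding,
      gridPoint_signedShift_single hN₀]
  · simp only [forall_mem_image]
    intro v hv
    simp [ha hv, ← hb]

lemma bijOn_image_add_single (hN : Even N) (l : ι) :
    Set.BijOn (image (· + EuclideanSpace.single l (1 : ℝ)))
      {S | S ∈ (gridComplex ι N).faces ∧ ∀ x ∈ S, x l = 0}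
      {S | S ∈ (gridComplex ι N).faces ∧ ∀ x ∈ S, x l = 1} := by
  have hup := mapsTo_image_add_single hN l (zero_add 1) zero_le_one le_rfl
  have hdown := mapsTo_image_add_single hN l (add_neg_cancel 1) le_rfl zero_le_one
  rw [Int.cast_neg, EuclideanSpace.single, PiLp.single_neg] at hdown
  push_cast at hup hdown
  have hcancel {u v : EuclideanSpace ℝ ι} (huv : u + v = 0) (S : Finset (EuclideanSpace ℝ ι)) :
      (S.image (· + u)).image (· + v) = S := by
    simp only [image_image, Function.comp_def, add_assoc, huv, add_zero, image_id']
  exact Set.InvOn.bijOn ⟨fun S _ => hcancel (add_neg_cancel _) S,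
    fun S _ => hcancel (neg_add_cancel _) S⟩ hup hdown

end Translation

end GridComplex

section Tetrahedra

open Finset

instance {ι : Type*} [Fintype ι] (s : Finset (ι → ℤ)) : Decidable (IsCheckerboard s) :=
  inferInstanceAs (Decidable (∀ v ∈ s, ∀ w ∈ s, l1Dist v w ≤ 2 ∧ (Odd (∑ i, v i) → l1Dist v w ≤ 1)))

/-- The four-element checkerboard sets of vertices of the cell with least vertex `c`. -/
noncomputable def cellTetrahedra (c : Fin 3 → ℤ) : Finset (Finset (Fin 3 → ℤ)) :=
  {s ∈ (Icc c (c + 1)).powersetCard 4 | IsCheckerboard s}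

variable {c d : Fin 3 → ℤ} {s : Finset (Fin 3 → ℤ)}

lemma mem_cellTetrahedra :
    s ∈ cellTetrahedra c ↔ (↑s ⊆ cell c ∧ #s = 4) ∧ IsCheckerboard s := by
  rw [cellTetrahedra, mem_filter, mem_powersetCard, ← coe_subset, coe_Icc, cell]

lemma finsetCongr_signedShift_mem_cellTetrahedra_iff {p : Fin 3 → ℤ} {σ : Fin 3 → ℤˣ}
    (h : IsCellCorner c p σ) (hp : Even (∑ i, p i)) :
    (signedShift p σ).finsetCongr s ∈ cellTetrahedra c ↔ s ∈ cellTetrahedra 0 := by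
  simp only [mem_cellTetrahedra, Equiv.finsetCongr_apply, card_map,
    isCheckerboard_map_signedShift_iff hp, coe_map, Set.image_subset_iff, Equiv.coe_toEmbedding]
  simp only [Set.subset_def, Set.mem_preimage, h.signedShift_mem_cell_iff]

lemma card_cellTetrahedra (c : Fin 3 → ℤ) : #(cellTetrahedra c) = 5 := by
  obtain ⟨p, σ, h, hp⟩ := exists_isCellCorner_even c
  have hunit : #(cellTetrahedra 0) = 5 := by decide +kernel
  rw [← hunit]
  exact (card_equiv (signedShift p σ).finsetCongr fun s =>
    (finsetCongr_signedShift_mem_cellTetrahedra_iff h hp).symm).symm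

lemma exists_ne_of_mem_cellTetrahedra (hs : s ∈ cellTetrahedra c) (i : Fin 3) :
    ∃ v ∈ s, ∃ w ∈ s, v i ≠ w i := by
  obtain ⟨p, σ, h, hp⟩ := exists_isCellCorner_even c
  obtain ⟨s, rfl⟩ := (signedShift p σ).finsetCongr.surjective s
  rw [finsetCongr_signedShift_mem_cellTetrahedra_iff h hp] at hs
  have hunit : ∀ t ∈ cellTetrahedra 0, ∀ i, ∃ v ∈ t, ∃ w ∈ t, v i ≠ w i := by decide +kernel
  obtain ⟨v, hv, w, hw, hvw⟩ := hunit s hs i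
  refine ⟨_, mem_map_of_mem _ hv, _, mem_map_of_mem _ hw, ?_⟩
  simpa [signedShift_apply] using hvw

lemma eq_of_mem_cellTetrahedra (hc : s ∈ cellTetrahedra c) (hd : s ∈ cellTetrahedra d) :
    c = d := by
  funext i
  obtain ⟨v, hv, w, hw, hvw⟩ := exists_ne_of_mem_cellTetrahedra hc i
  have hsc u (hu : u ∈ s) := mem_cell.1 ((mem_cellTetrahedra.1 hc).1.1 hu) i
  have hsd u (hu : u ∈ s) := mem_cell.1 ((mem_cellTetrahedra.1 hd).1.1 hu) i
  have := hsc v hv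
  have := hsc w hw
  have := hsd v hv
  have := hsd w hw
  lia

lemma card_biUnion_cellTetrahedra (N : ℕ) :
    #((Icc (0 : Fin 3 → ℤ) (N - 1)).biUnion cellTetrahedra) = 5 * N ^ 3 := by
  have hdisj : (Icc (0 : Fin 3 → ℤ) (N - 1) : Set _).PairwiseDisjoint cellTetrahedra :=
    fun c _ d _ hcd => disjoint_left.2 fun s hc hd => hcd (eq_of_mem_cellTetrahedra hc hd)
  rw [card_biUnion hdisj, sum_congr rfl fun c _ => card_cellTetrahedra c, sum_const, Pi.card_Icc]
  simp [mul_comm]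

lemma isGridFace_and_card_eq_four_iff {N : ℕ} : IsGridFace N s ∧ #s = 4 ↔
    s ∈ (Icc (0 : Fin 3 → ℤ) (N - 1)).biUnion cellTetrahedra := by
  simp only [mem_biUnion, mem_cellTetrahedra]
  constructor
  · rintro ⟨⟨-, hs, c, hc, hsc⟩, hcard⟩
    exact ⟨c, mem_Icc.2 hc, ⟨hsc, hcard⟩, hs⟩
  · rintro ⟨c, hc, ⟨hsc, hcard⟩, hs⟩
    exact ⟨⟨card_pos.1 (by lia), hs, c, mem_Icc.1 hc, hsc⟩, hcard⟩

lemma ncard_tetrahedra_gridComplex {N : ℕ} (hN : N ≠ 0) :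
    {S ∈ (gridComplex (Fin 3) N).faces | #S = 4}.ncard = 5 * N ^ 3 := by
  have hinj := gridPoint_injective (ι := Fin 3) hN
  have himage : {S ∈ (gridComplex (Fin 3) N).faces | #S = 4} =
      image (gridPoint N) '' ((Icc (0 : Fin 3 → ℤ) (N - 1)).biUnion cellTetrahedra : Finset _) := by
    ext S
    simp only [Set.mem_ofPred_eq, mem_faces_gridComplex, Set.mem_image, mem_coe,
      ← isGridFace_and_card_eq_four_iff]
    constructor
    · rintro ⟨⟨s, hs, rfl⟩, hcard⟩
      exact ⟨s, ⟨hs, by rwa [card_image_of_injective s hinj] at hcard⟩, rfl⟩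
    · rintro ⟨s, ⟨hs, hcard⟩, rfl⟩
      exact ⟨⟨s, hs, rfl⟩, by rwa [card_image_of_injective s hinj]⟩
  rw [himage, Set.ncard_image_of_injective _ (image_injective hinj), Set.ncard_coe_finset,
    card_biUnion_cellTetrahedra]

end Tetrahedra

section Covering

open Finset

/-- The point `y` is a convex combination of at most four vertices of the cell with least vertex `c`
that form a checkerboard set. The vertices are listed by `v`, possibly with repetitions. -/
def IsCheckerboardCombination (c : Fin 3 → ℤ) (y : Fin 3 → ℝ) : Prop :=
  ∃ (v : Fin 4 → Fin 3 → ℤ) (w : Fin 4 → ℝ), IsCheckerboard (univ.image v) ∧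
    (∀ j, v j ∈ cell c) ∧ (∀ j, 0 ≤ w j) ∧ ∑ j, w j = 1 ∧ ∀ i, ∑ j, w j * v j i = y i

lemma isCheckerboardCombination_zero {t : Fin 3 → ℝ} (ht : ∀ i, t i ∈ Set.Icc (0 : ℝ) 1) :
    IsCheckerboardCombination 0 t := by
  have ht₀ := ht 0
  have ht₁ := ht 1
  have ht₂ := ht 2
  simp only [IsCheckerboardCombination, mem_cell, Fin.forall_fin_succ, Fin.sum_univ_four,
    Fin.isValue, Fin.reduceSucc, Fin.succ_zero_eq_one, Fin.succ_one_eq_two, IsEmpty.forall_iff,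
    and_true]
  -- The weights are barycentric coordinates, first in the four corners, last in the central
  -- tetrahedron.
  by_cases h₀ : t 1 + t 2 ≤ t 0
  · refine ⟨![![1, 0, 0], ![0, 0, 0], ![1, 1, 0], ![1, 0, 1]],
      ![t 0 - t 1 - t 2, 1 - t 0, t 1, t 2], by decide, by decide, ?_⟩
    simp only [Matrix.cons_val, Int.cast_zero, Int.cast_one]
    grind
  by_cases h₁ : t 0 + t 2 ≤ t 1
  · refine ⟨![![0, 1, 0], ![0, 0, 0], ![1, 1, 0], ![0, 1, 1]],
      ![t 1 - t 0 - t 2, 1 - t 1, t 0, t 2], by decide, by decide, ?_⟩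
    simp only [Matrix.cons_val, Int.cast_zero, Int.cast_one]
    grind
  by_cases h₂ : t 0 + t 1 ≤ t 2
  · refine ⟨![![0, 0, 1], ![0, 0, 0], ![1, 0, 1], ![0, 1, 1]],
      ![t 2 - t 0 - t 1, 1 - t 2, t 0, t 1], by decide, by decide, ?_⟩
    simp only [Matrix.cons_val, Int.cast_zero, Int.cast_one]
    grind
  by_cases h₃ : 2 ≤ t 0 + t 1 + t 2
  · refine ⟨![![1, 1, 1], ![1, 1, 0], ![1, 0, 1], ![0, 1, 1]],
      ![t 0 + t 1 + t 2 - 2, 1 - t 2, 1 - t 1, 1 - t 0], by decide, by decide, ?_⟩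
    simp only [Matrix.cons_val, Int.cast_zero, Int.cast_one]
    grind
  · refine ⟨![![0, 0, 0], ![1, 1, 0], ![1, 0, 1], ![0, 1, 1]],
      ![1 - (t 0 + t 1 + t 2) / 2, (t 0 + t 1 - t 2) / 2, (t 0 + t 2 - t 1) / 2,
        (t 1 + t 2 - t 0) / 2], by decide, by decide, ?_⟩
    simp only [Matrix.cons_val, Int.cast_zero, Int.cast_one]
    grind

lemma isCheckerboardCombination_of_mem_Icc {c : Fin 3 → ℤ} {y : Fin 3 → ℝ}
    (hy : ∀ i, y i ∈ Set.Icc (c i : ℝ) (c i + 1)) : IsCheckerboardCombination c y := by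
  obtain ⟨p, σ, hcorner, hp⟩ := exists_isCellCorner_even c
  have ht i : ((σ i : ℤ) : ℝ) * (y i - p i) ∈ Set.Icc (0 : ℝ) 1 := by
    have := hy i
    rcases hcorner i with ⟨hp, hσ⟩ | ⟨hp, hσ⟩ <;> rw [hp, hσ] <;> push_cast <;> grind
  obtain ⟨v, w, hv, hcell, hw₀, hw₁, hvt⟩ := isCheckerboardCombination_zero ht
  refine ⟨signedShift p σ ∘ v, w, ?_, fun j => hcorner.signedShift_mem_cell_iff.2 (hcell j),
    hw₀, hw₁, fun i => ?_⟩
  · rwa [← isCheckerboard_map_signedShift_iff (σ := σ) hp, map_eq_image, image_image] at hv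
  · have hσ : ((σ i : ℤ) : ℝ) * (σ i : ℤ) = 1 := by exact_mod_cast Int.units_coe_mul_self (σ i)
    calc ∑ j, w j * (signedShift p σ (v j) i : ℤ)
        = (∑ j, w j) * p i + (σ i : ℤ) * ∑ j, w j * v j i := by
          simp only [signedShift_apply, sum_mul, mul_sum, ← sum_add_distrib]
          exact sum_congr rfl fun j _ => by push_cast; ring
      _ = y i := by rw [hw₁, hvt, ← mul_assoc, hσ]; ring

lemma exists_int_mul_mem_Icc {N : ℕ} (hN : N ≠ 0) {x : ℝ} (hx : x ∈ Set.Icc (0 : ℝ) 1) :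
    ∃ c : ℤ, c ∈ Set.Icc (0 : ℤ) (N - 1) ∧ N * x ∈ Set.Icc (c : ℝ) (c + 1) := by
  have hNx₀ : 0 ≤ N * x := mul_nonneg N.cast_nonneg hx.1
  have hNx₁ : N * x ≤ N := mul_le_of_le_one_right N.cast_nonneg hx.2
  refine ⟨min ⌊N * x⌋ (N - 1), ⟨le_min (Int.floor_nonneg.2 hNx₀) (by lia), min_le_right _ _⟩,
    ?_, ?_⟩
  · exact (Int.cast_le.2 (min_le_left _ _)).trans (Int.floor_le _)
  · rw [Int.cast_min, ← min_add_add_right]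
    exact le_min (Int.lt_floor_add_one _).le (by simpa using hNx₁)

lemma convex_unitCube : Convex ℝ unitCube := fun _ hx _ hy _ _ ha hb hab i =>
  convex_Icc 0 1 (hx i) (hy i) ha hb hab

lemma gridPoint_mem_unitCube {N : ℕ} {v : Fin 3 → ℤ} (hv : v ∈ Set.Icc (0 : Fin 3 → ℤ) N) :
    gridPoint N v ∈ unitCube := fun i =>
  ⟨div_nonneg (Int.cast_nonneg (hv.1 i)) N.cast_nonneg,
    div_le_one_of_le₀ (by exact_mod_cast hv.2 i) N.cast_nonneg⟩

lemma space_gridComplex_subset (N : ℕ) : (gridComplex (Fin 3) N).space ⊆ unitCube := by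
  refine Set.iUnion₂_subset ?_
  rintro _ ⟨s, hs, rfl⟩
  refine convexHull_min ?_ convex_unitCube
  rw [coe_image, Set.image_subset_iff]
  exact fun v hv => gridPoint_mem_unitCube (hs.subset_Icc hv)

lemma unitCube_subset_space_gridComplex {N : ℕ} (hN : N ≠ 0) :
    unitCube ⊆ (gridComplex (Fin 3) N).space := fun x hx => by
  choose c hc hxc using fun i => exists_int_mul_mem_Icc hN (hx i)
  obtain ⟨v, w, hv, hcell, hw₀, hw₁, hvx⟩ := isCheckerboardCombination_of_mem_Icc hxc
  have hface : IsGridFace N (univ.image v) :=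
    ⟨univ_nonempty.image v, hv, c, ⟨fun i => (hc i).1, fun i => (hc i).2⟩, by
      simpa [Set.range_subset_iff] using hcell⟩
  have hsum : ∑ j, w j • gridPoint N (v j) = x := by
    ext i
    calc (∑ j, w j • gridPoint N (v j)) i = (∑ j, w j * v j i) / N := by
          simp [gridPoint_apply, sum_div, mul_div_assoc]
      _ = x i := by rw [hvx, mul_div_cancel_left₀ _ (Nat.cast_ne_zero.2 hN)]
  exact Geometry.SimplicialComplex.mem_space_iff.2 ⟨_, ⟨_, hface, rfl⟩,
    mem_convexHull_of_exists_fintype w (gridPoint N ∘ v) hw₀ hw₁ (by simp) hsum⟩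

lemma space_gridComplex {N : ℕ} (hN : N ≠ 0) : (gridComplex (Fin 3) N).space = unitCube :=
  (space_gridComplex_subset N).antisymm (unitCube_subset_space_gridComplex hN)

end Covering

lemma gridPoint_natCast (N : ℕ) (v : Fin 3 → ℕ) :
    gridPoint N (fun l => (v l : ℤ)) = pt3 (v 0 / N) (v 1 / N) (v 2 / N) := by
  ext l
  fin_cases l <;> rfl

lemma vertices_gridComplex_fin_three {N : ℕ} (hN : N ≠ 0) : (gridComplex (Fin 3) N).vertices =
    {x | ∃ i j k : ℕ, i ≤ N ∧ j ≤ N ∧ k ≤ N ∧ x = pt3 (i / N) (j / N) (k / N)} := by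
  rw [vertices_gridComplex hN]
  ext x
  constructor
  · rintro ⟨v, ⟨hv₀, hvN⟩, rfl⟩
    lift v to Fin 3 → ℕ using hv₀
    have hle l : v l ≤ N := Int.ofNat_le.1 (hvN l)
    exact ⟨v 0, v 1, v 2, hle 0, hle 1, hle 2, gridPoint_natCast N v⟩
  · rintro ⟨i, j, k, hi, hj, hk, rfl⟩
    have hle : ∀ l, ![i, j, k] l ≤ N := by simp [Fin.forall_fin_succ, *]
    exact ⟨_, ⟨fun l => Int.natCast_nonneg _, fun l => Int.ofNat_le.2 (hle l)⟩,
      gridPoint_natCast N ![i, j, k]⟩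

/-- For every `n ≥ 1` there is a finite geometric simplicial complex triangulating the unit
cube `[0,1]³` whose vertex set is the grid `{(i/2n, j/2n, k/2n) : 0 ≤ i,j,k ≤ 2n}`
(so it has `(2n+1)³` vertices), with exactly `5·(2n)³` three-dimensional simplices,
every simplex of diameter at most `1/(n√2)`, and such that for each coordinate direction
`l`, translation by the standard basis vector `e_l` maps the simplices contained in the
face `{x_l = 0}` bijectively onto the simplices contained in the opposite face `{x_l = 1}`.
(Identifying opposite faces yields a triangulation of the 3-torus `T³ = ℝ³/ℤ³` with
`8n³` vertices and `40n³` tetrahedra.) -/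
theorem cube_triangulation_mesh_small (n : ℕ) (hn : 1 ≤ n) :
    ∃ K : Geometry.SimplicialComplex ℝ (EuclideanSpace ℝ (Fin 3)),
      K.faces.Finite ∧
      -- (i) the space of the complex is the unit cube
      K.space = unitCube ∧
      -- (ii) the vertices are exactly the grid points
      K.vertices = {x | ∃ i j k : ℕ, i ≤ 2 * n ∧ j ≤ 2 * n ∧ k ≤ 2 * n ∧
        x = pt3 ((i : ℝ) / (2 * n)) ((j : ℝ) / (2 * n)) ((k : ℝ) / (2 * n))} ∧
      K.vertices.ncard = (2 * n + 1) ^ 3 ∧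
      -- (iii) exactly `5·(2n)³` three-dimensional simplices
      {s ∈ K.faces | s.card = 4}.ncard = 5 * (2 * n) ^ 3 ∧
      -- (iv) every simplex has diameter at most `1/(n√2)`
      (∀ s ∈ K.faces, Metric.diam (convexHull ℝ (s : Set (EuclideanSpace ℝ (Fin 3))))
        ≤ 1 / (n * Real.sqrt 2)) ∧
      -- (v) translation by `e_l` maps the simplices in the face `{x_l = 0}` bijectively
      -- onto the simplices in the face `{x_l = 1}`
      (∀ l : Fin 3, Set.BijOn
        (fun s : Finset (EuclideanSpace ℝ (Fin 3)) =>
          s.image (fun x => x + EuclideanSpace.single l (1 : ℝ)))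
        {s | s ∈ K.faces ∧ ∀ x ∈ s, x l = 0}
        {s | s ∈ K.faces ∧ ∀ x ∈ s, x l = 1}) := by
  have hN : 2 * n ≠ 0 := by lia
  have hmesh : √2 / (2 * n : ℕ) = 1 / (n * √2) := by
    rw [Nat.cast_mul, Nat.cast_ofNat, ← div_div, Real.sqrt_div_self', div_div, mul_comm]
  refine ⟨gridComplex (Fin 3) (2 * n), finite_faces_gridComplex, space_gridComplex hN, ?_,
    ncard_vertices_gridComplex hN, ncard_tetrahedra_gridComplex hN, fun S hS => ?_,
    bijOn_image_add_single (even_two_mul n)⟩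
  · simpa using vertices_gridComplex_fin_three hN
  · exact (diam_convexHull_le_of_mem_faces_gridComplex hS).trans_eq hmesh
end

section
/- There exists a finite geometric simplicial complex K in ℝ³ such that: (a) the union of the simplices of K is the unit cube [0,1]³; (b) K has exactly 77 vertices, of which 64 are exactly the points {(i/3, j/3, k/3) : 0 ≤ i, j, k ≤ 3} and the remaining 13 belong to the 27-element set {((2i+1)/6, (2j+1)/6, (2k+1)/6) : 0 ≤ i, j, k ≤ 2}; (c) each of the six closed 2-dimensional faces of the cube [0,1]³ contains exactly 16 vertices of K; (d) K has exactly 202 three-dimensional simplices, 458 two-dimensional simplices and 332 one-dimensional simplices; (e) every simplex of K has diameter at most √2/3; and (f) for each coordinate l ∈ {1,2,3}, translation by the standard basis vector e_l maps the set of simplices of K contained in the face {x ∈ [0,1]³ : x_l = 0} bijectively onto the set of simplices of K contained in the opposite face {x ∈ [0,1]³ : x_l = 1}. -/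
open scoped Classical

/-- The grid of the `64` points `(i/3, j/3, k/3)`, `0 ≤ i,j,k ≤ 3`. -/
def thirdGrid : Set (EuclideanSpace ℝ (Fin 3)) :=
  {x | ∃ i j k : ℕ, i ≤ 3 ∧ j ≤ 3 ∧ k ≤ 3 ∧
    x = pt3 ((i : ℝ) / 3) ((j : ℝ) / 3) ((k : ℝ) / 3)}

/-- The `27` centers `((2i+1)/6, (2j+1)/6, (2k+1)/6)`, `0 ≤ i,j,k ≤ 2`. -/
def centerGrid : Set (EuclideanSpace ℝ (Fin 3)) :=
  {x | ∃ i j k : ℕ, i ≤ 2 ∧ j ≤ 2 ∧ k ≤ 2 ∧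
    x = pt3 ((2 * i + 1 : ℝ) / 6) ((2 * j + 1 : ℝ) / 6) ((2 * k + 1 : ℝ) / 6)}

/-!
The triangulation is regular: it is the projection of the lower convex hull of a height function on
the `77` vertices. Each tetrahedron carries a support form, the affine form through the heights of
its vertices, which stays strictly below the height of every other vertex. Two tetrahedra then meet
in a common face, because the difference of their support forms exposes that face in both of them.
They cover the cube, because a point lies in any tetrahedron whose support form is maximal there: if
it were beyond some ridge of the tetrahedron, then it would be outside the cube or the support form
of the tetrahedron across that ridge would be larger.

The height is a convex quadratic function, lowered at some vertices. The quadratic function reduces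
to the same one in every subcube up to affine forms, so only a few triangulations of the subcube
occur. What remains are finite checks with integers.
-/

theorem injOn_sum_pow {α : Type*} {n : ℕ} (hn : 2 ≤ n) {A : Finset α} {e : α → ℕ}
    (he : Set.InjOn e A) : Set.InjOn (fun s : Finset α => ∑ a ∈ s, n ^ e a) A.powerset := by
  intro s hs t ht hst
  have hsum {r : Finset α} (hr : r ∈ A.powerset) : ∑ a ∈ r, n ^ e a = ∑ m ∈ r.image e, n ^ m :=
    (Finset.sum_image (he.mono (Finset.mem_powerset.1 hr))).symm
  simp only [hsum hs, hsum ht] at hst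
  exact Finset.image_injOn_powerset_of_injOn he hs ht (Finset.geomSum_injective hn hst)

section AffineForms

variable {𝕜 E : Type*} [Field 𝕜] [AddCommGroup E] [Module 𝕜 E]

theorem affineIndependent_of_exists_dual_form {ι : Type*} {p : ι → E}
    (h : ∀ i, ∃ f : E →ᵃ[𝕜] 𝕜, f (p i) ≠ 0 ∧ ∀ j ≠ i, f (p j) = 0) :
    AffineIndependent 𝕜 p := by
  rw [affineIndependent_iff]
  intro s w hw hwp i hi
  obtain ⟨f, hfi, hfj⟩ := h i
  have hf_sum : ∑ j ∈ s, w j * f (p j) = 0 := calc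
    ∑ j ∈ s, w j * f (p j) = f.linear (∑ j ∈ s, w j • p j) + (∑ j ∈ s, w j) * f 0 := by
      simp only [map_sum, map_smul, smul_eq_mul, Finset.sum_mul, ← Finset.sum_add_distrib,
        ← mul_add, AffineMap.decomp' f, Pi.sub_apply, sub_add_cancel]
    _ = 0 := by rw [hw, hwp, map_zero, zero_mul, add_zero]
  rw [Finset.sum_eq_single_of_mem i hi fun j _ hj => by rw [hfj j hj, mul_zero]] at hf_sum
  exact (mul_eq_zero.1 hf_sum).resolve_right hfi

variable [LinearOrder 𝕜] [IsStrictOrderedRing 𝕜]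

theorem mem_convexHull_zeros_of_nonpos {A : Set E} {f : E →ᵃ[𝕜] 𝕜} (hf : ∀ y ∈ A, 0 ≤ f y)
    {x : E} (hx : x ∈ convexHull 𝕜 A) (hfx : f x ≤ 0) :
    x ∈ convexHull 𝕜 {y ∈ A | f y = 0} := by
  suffices h : convexHull 𝕜 A ⊆
      {x | 0 ≤ f x ∧ (f x ≤ 0 → x ∈ convexHull 𝕜 {y ∈ A | f y = 0})} from (h hx).2 hfx
  refine convexHull_min (fun y hy => ⟨hf y hy, fun hy0 => ?_⟩) ?_
  · exact subset_convexHull 𝕜 _ ⟨hy, hy0.antisymm (hf y hy)⟩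
  rw [convex_iff_forall_pos]
  rintro y ⟨hy, hy0⟩ z ⟨hz, hz0⟩ a b ha hb hab
  have hcomb : f (a • y + b • z) = a * f y + b * f z := Convex.combo_affine_apply hab
  refine ⟨by rw [hcomb]; positivity, fun hle => ?_⟩
  rw [hcomb] at hle
  have hay := mul_nonneg ha.le hy
  have hbz := mul_nonneg hb.le hz
  exact convex_convexHull 𝕜 _ (hy0 (nonpos_of_mul_nonpos_right (by linarith) ha))
    (hz0 (nonpos_of_mul_nonpos_right (by linarith) hb)) ha.le hb.le hab

theorem mem_convexHull_of_forall_exists_dual_form [FiniteDimensional 𝕜 E] {ι : Type*} [Fintype ι]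
    {p : ι → E} (hcard : Fintype.card ι = Module.finrank 𝕜 E + 1) {x : E}
    (h : ∀ i, ∃ f : E →ᵃ[𝕜] 𝕜, 0 < f (p i) ∧ (∀ j ≠ i, f (p j) = 0) ∧ 0 ≤ f x) :
    x ∈ convexHull 𝕜 (Set.range p) := by
  have hp : AffineIndependent 𝕜 p := affineIndependent_of_exists_dual_form fun i =>
    let ⟨f, hpos, hzero, _⟩ := h i; ⟨f, hpos.ne', hzero⟩
  let b : AffineBasis ι 𝕜 E := ⟨p, hp, hp.affineSpan_eq_top_iff_card_eq_finrank_add_one.2 hcard⟩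
  have hb : Set.range b = Set.range p := rfl
  rw [← hb, b.convexHull_eq_nonneg_coord]
  intro i
  obtain ⟨f, hpos, hzero, hx⟩ := h i
  have hfx : f x = b.coord i x * f (p i) := calc
    f x = f (Finset.univ.affineCombination 𝕜 b fun j => b.coord j x) := by
      rw [b.affineCombination_coord_eq_self]
    _ = ∑ j, b.coord j x * f (p j) := by
      rw [Finset.map_affineCombination _ _ _ (b.sum_coord_apply_eq_one x),
        Finset.affineCombination_eq_linear_combination _ _ _ (b.sum_coord_apply_eq_one x)]
      rfl
    _ = b.coord i x * f (p i) :=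
      Finset.sum_eq_single_of_mem i (Finset.mem_univ i) fun j _ hj => by rw [hzero j hj, mul_zero]
  rw [hfx] at hx
  exact nonneg_of_mul_nonneg_left hx hpos

end AffineForms

/-- A triangulation of the polytope cut out by `walls`, whose `facet`s are the domains of linearity
of the pointwise maximum of their `support` forms. -/
structure RegularTriangulation (𝕜 ι E : Type*) [Field 𝕜] [LinearOrder 𝕜] [AddCommGroup E]
    [Module 𝕜 E] where
  facet : ι → Finset E
  support : ι → E →ᵃ[𝕜] 𝕜
  walls : Set (E →ᵃ[𝕜] 𝕜)
  card_facet : ∀ i, (facet i).card = Module.finrank 𝕜 E + 1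
  support_eq : ∀ {i j p}, p ∈ facet i → p ∈ facet j → support j p = support i p
  support_lt : ∀ {i j p}, p ∈ facet i → p ∉ facet j → support j p < support i p
  wall_nonneg : ∀ {i p f}, p ∈ facet i → f ∈ walls → 0 ≤ f p
  ridge : ∀ {i p}, p ∈ facet i →
    (∃ j, p ∉ facet j ∧ ∀ q ∈ facet i, q ≠ p → q ∈ facet j) ∨
    ∃ f ∈ walls, 0 < f p ∧ ∀ q ∈ facet i, q ≠ p → f q = 0

namespace RegularTriangulation

variable {𝕜 ι E : Type*} [Field 𝕜] [LinearOrder 𝕜] [IsStrictOrderedRing 𝕜]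
  [AddCommGroup E] [Module 𝕜 E] (𝒯 : RegularTriangulation 𝕜 ι E)

theorem exists_ridge_form {i : ι} {p : E} (hp : p ∈ 𝒯.facet i) :
    ∃ f : E →ᵃ[𝕜] 𝕜, 0 < f p ∧ (∀ q ∈ 𝒯.facet i, q ≠ p → f q = 0) ∧
      (f ∈ 𝒯.walls ∨ ∃ j, f = 𝒯.support i - 𝒯.support j) := by
  rcases 𝒯.ridge hp with ⟨j, hpj, hj⟩ | ⟨f, hf, hfp, hfq⟩
  · refine ⟨𝒯.support i - 𝒯.support j, ?_, fun q hq hqp => ?_, .inr ⟨j, rfl⟩⟩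
    · exact sub_pos.2 (𝒯.support_lt hp hpj)
    · exact sub_eq_zero.2 (𝒯.support_eq (hj q hq hqp) hq)
  · exact ⟨f, hfp, hfq, .inl hf⟩

theorem affineIndependent_facet (i : ι) :
    AffineIndependent 𝕜 ((↑) : 𝒯.facet i → E) :=
  affineIndependent_of_exists_dual_form fun p =>
    let ⟨f, hpos, hzero, _⟩ := 𝒯.exists_ridge_form p.2
    ⟨f, hpos.ne', fun q hqp => hzero q q.2 (Subtype.coe_ne_coe.2 hqp)⟩

theorem convexHull_facet_inter_subset (i j : ι) :
    convexHull 𝕜 (𝒯.facet i : Set E) ∩ convexHull 𝕜 (𝒯.facet j) ⊆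
      convexHull 𝕜 (𝒯.facet i ∩ 𝒯.facet j : Set E) := by
  rintro x ⟨hxi, hxj⟩
  let f : E →ᵃ[𝕜] 𝕜 := 𝒯.support i - 𝒯.support j
  have hf_nonneg : ∀ p ∈ 𝒯.facet i, 0 ≤ f p := fun p hp =>
    sub_nonneg.2 <| if hpj : p ∈ 𝒯.facet j then (𝒯.support_eq hp hpj).le
      else (𝒯.support_lt hp hpj).le
  have hf_nonpos : ∀ p ∈ 𝒯.facet j, f p ≤ 0 := fun p hp =>
    sub_nonpos.2 <| if hpi : p ∈ 𝒯.facet i then (𝒯.support_eq hp hpi).le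
      else (𝒯.support_lt hp hpi).le
  have hfx : f x ≤ 0 :=
    convexHull_min (t := f ⁻¹' Set.Iic 0) hf_nonpos ((convex_Iic 0).affine_preimage f) hxj
  refine convexHull_mono ?_ (mem_convexHull_zeros_of_nonpos hf_nonneg hxi hfx)
  rintro p ⟨hpi, hp⟩
  exact ⟨hpi, by_contra fun hpj => (sub_pos.2 (𝒯.support_lt hpi hpj)).ne' hp⟩

theorem convexHull_face_inter_subset {i j : ι} {s t : Finset E} (hs : s ⊆ 𝒯.facet i)
    (ht : t ⊆ 𝒯.facet j) :
    convexHull 𝕜 (s : Set E) ∩ convexHull 𝕜 t ⊆ convexHull 𝕜 (s ∩ t : Set E) := by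
  rintro x ⟨hxs, hxt⟩
  have hx : x ∈ convexHull 𝕜 (𝒯.facet i ∩ 𝒯.facet j : Set E) :=
    𝒯.convexHull_facet_inter_subset i j ⟨convexHull_mono hs hxs, convexHull_mono ht hxt⟩
  rw [← Finset.coe_inter] at hx
  have hxsj : x ∈ convexHull 𝕜 (s ∩ (𝒯.facet i ∩ 𝒯.facet j : Finset E) : Set E) := by
    rw [(𝒯.affineIndependent_facet i).convexHull_inter hs Finset.inter_subset_left]
    exact ⟨hxs, hx⟩
  rw [← Finset.coe_inter] at hxsj
  have hxst : x ∈ convexHull 𝕜 ((s ∩ (𝒯.facet i ∩ 𝒯.facet j) : Finset E) ∩ t : Set E) := by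
    rw [(𝒯.affineIndependent_facet j).convexHull_inter
      (Finset.inter_subset_right.trans Finset.inter_subset_right) ht]
    exact ⟨hxsj, hxt⟩
  rw [← Finset.coe_inter] at hxst ⊢
  exact convexHull_mono (by gcongr; exact Finset.inter_subset_left) hxst

/-- The simplicial complex of all faces of the facets. -/
def complex : Geometry.SimplicialComplex 𝕜 E where
  faces := {s | s.Nonempty ∧ ∃ i, s ⊆ 𝒯.facet i}
  isRelLowerSet_faces := fun _ ⟨hs, i, hsi⟩ => ⟨hs, fun _ hts ht => ⟨ht, i, hts.trans hsi⟩⟩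
  indep := fun ⟨_, i, hsi⟩ => (𝒯.affineIndependent_facet i).mono hsi
  inter_subset_convexHull := fun ⟨_, _, hs⟩ ⟨_, _, ht⟩ => 𝒯.convexHull_face_inter_subset hs ht

theorem mem_complex_faces {s : Finset E} :
    s ∈ 𝒯.complex.faces ↔ s.Nonempty ∧ ∃ i, s ⊆ 𝒯.facet i := Iff.rfl

theorem mem_complex_vertices {p : E} : p ∈ 𝒯.complex.vertices ↔ ∃ i, p ∈ 𝒯.facet i := by
  simp [Geometry.SimplicialComplex.mem_vertices, mem_complex_faces]

theorem finite_complex_faces [Finite ι] : 𝒯.complex.faces.Finite := by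
  refine (Set.finite_iUnion fun i => (𝒯.facet i).powerset.finite_toSet).subset ?_
  rintro s ⟨-, i, hsi⟩
  exact Set.mem_iUnion.2 ⟨i, Finset.mem_coe.2 (Finset.mem_powerset.2 hsi)⟩

/-- A point of the polytope lies in any facet whose support form is maximal there, as a negative
ridge form would exhibit a neighbouring facet with a larger support form. -/
theorem mem_convexHull_facet_of_forall_support_le [FiniteDimensional 𝕜 E] {x : E}
    (hx : ∀ f ∈ 𝒯.walls, 0 ≤ f x) {i : ι} (hi : ∀ j, 𝒯.support j x ≤ 𝒯.support i x) :
    x ∈ convexHull 𝕜 (𝒯.facet i : Set E) := by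
  rw [← Subtype.range_coe (s := (𝒯.facet i : Set E))]
  refine mem_convexHull_of_forall_exists_dual_form (p := ((↑) : 𝒯.facet i → E))
    (by rw [Fintype.card_coe, 𝒯.card_facet]) fun p => ?_
  obtain ⟨f, hpos, hzero, hf⟩ := 𝒯.exists_ridge_form p.2
  refine ⟨f, hpos, fun q hqp => hzero q q.2 (Subtype.coe_ne_coe.2 hqp), ?_⟩
  rcases hf with hf | ⟨j, rfl⟩
  · exact hx f hf
  · exact sub_nonneg.2 (hi j)

theorem complex_space [FiniteDimensional 𝕜 E] [Finite ι] [Nonempty ι] :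
    𝒯.complex.space = {x | ∀ f ∈ 𝒯.walls, 0 ≤ f x} := by
  ext x
  rw [Geometry.SimplicialComplex.mem_space_iff]
  constructor
  · rintro ⟨s, ⟨-, i, hsi⟩, hxs⟩ f hf
    exact convexHull_min (t := f ⁻¹' Set.Ici 0) (fun p hp => 𝒯.wall_nonneg (hsi hp) hf)
      ((convex_Ici 0).affine_preimage f) hxs
  · intro hx
    obtain ⟨i, hi⟩ := Finite.exists_max fun i => 𝒯.support i x
    have hxi := 𝒯.mem_convexHull_facet_of_forall_support_le hx hi
    exact ⟨𝒯.facet i, ⟨Finset.coe_nonempty.1 (convexHull_nonempty_iff.1 ⟨x, hxi⟩), i, subset_rfl⟩,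
      hxi⟩

end RegularTriangulation

namespace CubeTriangulation

/-! ### Cells and heights -/

/-- Points and covectors of the lattice `(1/6)ℤ³`, in units of `1/6`, so that the unit cube becomes
`[0, 6]³` and its `27` subcubes have side `2`. -/
abbrev Lattice : Type := ℤ × ℤ × ℤ

/-- The standard dot product. -/
def dot (p q : Lattice) : ℤ := p.1 * q.1 + p.2.1 * q.2.1 + p.2.2 * q.2.2

/-- The sum of the coordinates, whose residue classes select the pattern of the triangulation. -/
def coordSum (p : Lattice) : ℤ := p.1 + p.2.1 + p.2.2

/-- The standard basis of the lattice. -/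
def unit : Fin 3 → Lattice := ![(1, 0, 0), (0, 1, 0), (0, 0, 1)]

/-- An affine form with integer coefficients on the lattice. -/
structure LatticeForm where
  grad : Lattice
  const : ℤ

/-- The value of an affine form at a lattice point. -/
def LatticeForm.eval (f : LatticeForm) (p : Lattice) : ℤ := dot f.grad p + f.const

/-- A tetrahedron in a subcube centered at the origin, with the affine form through the local
heights of its vertices; see `localCells` for its placement and `eval_form_eq` for the heights. -/
structure Cell where
  verts : Finset Lattice
  form : LatticeForm

/-- The four corners of the cube cut off by the tetrahedron of `evenCells`. -/
def evenCornerCells : List Cell :=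
  [⟨{(-1, -1, -1), (-1, -1, 1), (-1, 1, 1), (1, -1, 1)}, (-6, -6, 2), -1⟩,
    ⟨{(-1, -1, -1), (-1, 1, -1), (-1, 1, 1), (1, 1, -1)}, (-6, 2, -6), -1⟩,
    ⟨{(-1, -1, -1), (1, -1, -1), (1, -1, 1), (1, 1, -1)}, (2, -6, -6), -1⟩,
    ⟨{(-1, 1, 1), (1, -1, 1), (1, 1, -1), (1, 1, 1)}, (4, 4, 4), -3⟩]

/-- The five-tetrahedron triangulation of the cube around the corners with an even number of
positive local coordinates. -/
def evenCells : List Cell :=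
  ⟨{(-1, -1, -1), (-1, 1, 1), (1, -1, 1), (1, 1, -1)}, (-2, -2, -2), 3⟩ :: evenCornerCells

/-- `evenCells` with the inner tetrahedron starred at the center of the cube. -/
def evenStarCells : List Cell :=
  [⟨{(-1, -1, -1), (-1, 1, 1), (0, 0, 0), (1, -1, 1)}, (-5, -5, 1), 0⟩,
    ⟨{(-1, -1, -1), (-1, 1, 1), (0, 0, 0), (1, 1, -1)}, (-5, 1, -5), 0⟩,
    ⟨{(-1, -1, -1), (0, 0, 0), (1, -1, 1), (1, 1, -1)}, (1, -5, -5), 0⟩,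
    ⟨{(-1, 1, 1), (0, 0, 0), (1, -1, 1), (1, 1, -1)}, (1, 1, 1), 0⟩] ++ evenCornerCells

/-- The five-tetrahedron triangulation of the cube around the corners with an odd number of
positive local coordinates. -/
def oddCells : List Cell :=
  [⟨{(-1, -1, -1), (-1, -1, 1), (-1, 1, -1), (1, -1, -1)}, (-4, -4, -4), -3⟩,
    ⟨{(-1, -1, 1), (-1, 1, -1), (-1, 1, 1), (1, 1, 1)}, (-2, 6, 6), -1⟩,
    ⟨{(-1, -1, 1), (-1, 1, -1), (1, -1, -1), (1, 1, 1)}, (2, 2, 2), 3⟩,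
    ⟨{(-1, -1, 1), (1, -1, -1), (1, -1, 1), (1, 1, 1)}, (6, -2, 6), -1⟩,
    ⟨{(-1, 1, -1), (1, -1, -1), (1, 1, -1), (1, 1, 1)}, (6, 6, -2), -1⟩]

/-- The triangulation of the cube that cuts off two antipodal corners and cones the boundary of the
remaining octahedron from the center. -/
def octahedronCells : List Cell :=
  [⟨{(-1, -1, -1), (-1, -1, 1), (-1, 1, -1), (1, -1, -1)}, (-10, -10, -10), -9⟩,
    ⟨{(-1, -1, 1), (-1, 1, -1), (-1, 1, 1), (0, 0, 0)}, (-1, 0, 0), 0⟩,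
    ⟨{(-1, -1, 1), (-1, 1, -1), (0, 0, 0), (1, -1, -1)}, (-1, -1, -1), 0⟩,
    ⟨{(-1, -1, 1), (-1, 1, 1), (0, 0, 0), (1, -1, 1)}, (0, 0, 1), 0⟩,
    ⟨{(-1, -1, 1), (0, 0, 0), (1, -1, -1), (1, -1, 1)}, (0, -1, 0), 0⟩,
    ⟨{(-1, 1, -1), (-1, 1, 1), (0, 0, 0), (1, 1, -1)}, (0, 1, 0), 0⟩,
    ⟨{(-1, 1, -1), (0, 0, 0), (1, -1, -1), (1, 1, -1)}, (0, 0, -1), 0⟩,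
    ⟨{(-1, 1, 1), (0, 0, 0), (1, -1, 1), (1, 1, -1)}, (1, 1, 1), 0⟩,
    ⟨{(-1, 1, 1), (1, -1, 1), (1, 1, -1), (1, 1, 1)}, (10, 10, 10), -9⟩,
    ⟨{(0, 0, 0), (1, -1, -1), (1, -1, 1), (1, 1, -1)}, (1, 0, 0), 0⟩]

/-- The cone from the center over the boundary of `octahedronCells`. -/
def coneCells : List Cell :=
  [⟨{(-1, -1, -1), (-1, -1, 1), (-1, 1, -1), (0, 0, 0)}, (-13, -10, -10), -12⟩,
    ⟨{(-1, -1, -1), (-1, -1, 1), (0, 0, 0), (1, -1, -1)}, (-10, -13, -10), -12⟩,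
    ⟨{(-1, -1, -1), (-1, 1, -1), (0, 0, 0), (1, -1, -1)}, (-10, -10, -13), -12⟩,
    ⟨{(-1, -1, 1), (-1, 1, -1), (-1, 1, 1), (0, 0, 0)}, (-13, 0, 0), -12⟩,
    ⟨{(-1, -1, 1), (-1, 1, 1), (0, 0, 0), (1, -1, 1)}, (0, 0, 13), -12⟩,
    ⟨{(-1, -1, 1), (0, 0, 0), (1, -1, -1), (1, -1, 1)}, (0, -13, 0), -12⟩,
    ⟨{(-1, 1, -1), (-1, 1, 1), (0, 0, 0), (1, 1, -1)}, (0, 13, 0), -12⟩,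
    ⟨{(-1, 1, -1), (0, 0, 0), (1, -1, -1), (1, 1, -1)}, (0, 0, -13), -12⟩,
    ⟨{(-1, 1, 1), (0, 0, 0), (1, -1, 1), (1, 1, 1)}, (10, 10, 13), -12⟩,
    ⟨{(-1, 1, 1), (0, 0, 0), (1, 1, -1), (1, 1, 1)}, (10, 13, 10), -12⟩,
    ⟨{(0, 0, 0), (1, -1, -1), (1, -1, 1), (1, 1, -1)}, (13, 0, 0), -12⟩,
    ⟨{(0, 0, 0), (1, -1, 1), (1, 1, -1), (1, 1, 1)}, (13, 10, 10), -12⟩]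

/-- The subcubes deviating from the pattern determined by the residue of `coordSum` modulo `3`.
Among the subcubes they are four with residue `1`, which gain an inner vertex, and four with
residue `0`, which lose two tetrahedra each. -/
def IsModified (c : Lattice) : Prop := coordSum c ∈ [7, 9] ∧ c.2.2 ≠ 3

instance : DecidablePred IsModified := fun _ => inferInstanceAs (Decidable (_ ∧ _))

/-- The cells of the subcube centered at `c`, in coordinates relative to `c`. -/
def localCells (c : Lattice) : List Cell :=
  if coordSum c % 3 = 2 then oddCells
  else if coordSum c % 3 = 1 then if IsModified c then evenStarCells else evenCells
  else if IsModified c then octahedronCells else coneCells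

/-- The centers of the `27` subcubes. -/
def cubeCenters : Finset Lattice := {1, 3, 5} ×ˢ {1, 3, 5} ×ˢ {1, 3, 5}

/-- The corners of the subcubes. -/
def gridVertices : Finset Lattice := {0, 2, 4, 6} ×ˢ {0, 2, 4, 6} ×ˢ {0, 2, 4, 6}

/-- The centers of the subcubes that are vertices of the triangulation. -/
def centerVertices : Finset Lattice := {c ∈ cubeCenters | coordSum c % 3 = 0 ∨ IsModified c}

/-- The vertices of the triangulation. -/
def vertices : Finset Lattice := gridVertices ∪ centerVertices

/-- The convex quadratic part of the height function. As `quad p - quad (p - c)` is affine in `p`,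
replacing it by `quad (p - c)` does not change the regular triangulation. -/
def quad (p : Lattice) : ℤ := 4 * dot p p + coordSum p ^ 2

/-- The amount by which the height of a vertex is lowered below `quad`. The corners in the residue
class that is not lowered get cut off by tetrahedra, and lowering a center cones its subcube from
it. -/
def depth (p : Lattice) : ℤ :=
  if p.1 % 2 = 0 then if coordSum p % 6 = 0 then 0 else 12 else if IsModified p then 0 else 12

/-- The vertices of the cell `T` placed in the subcube centered at `c`. -/
def placedVerts (c : Lattice) (T : Cell) : Finset Lattice := T.verts.map (addLeftEmbedding c)

/-- The outer unit normals of the faces of a cube. -/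
def faceNormals : List Lattice := [0, 1, 2].flatMap fun l => [unit l, -unit l]

theorem card_verts : ∀ c ∈ cubeCenters, ∀ T ∈ localCells c, T.verts.card = 4 := by decide +kernel

theorem placedVerts_subset_vertices :
    ∀ c ∈ cubeCenters, ∀ T ∈ localCells c, placedVerts c T ⊆ vertices := by decide +kernel

theorem exists_mem_placedVerts :
    ∀ p ∈ vertices, ∃ c ∈ cubeCenters, ∃ T ∈ localCells c, p ∈ placedVerts c T := by
  decide +kernel

theorem eval_form_eq : ∀ c ∈ cubeCenters, ∀ T ∈ localCells c, ∀ u ∈ T.verts,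
    T.form.eval u = quad u - depth (c + u) := by decide +kernel

theorem eval_form_lt : ∀ c ∈ cubeCenters, ∀ T ∈ localCells c, ∀ p ∈ vertices,
    T.form.eval (p - c) < quad (p - c) - depth p ∨ p - c ∈ T.verts := by decide +kernel

theorem dot_faceNormal_le : ∀ n ∈ faceNormals, ∀ c ∈ cubeCenters, ∀ T ∈ localCells c,
    ∀ u ∈ T.verts, dot n u ≤ 1 := by decide +kernel

theorem ridge_interior_or_subset_cubeFace :
    ∀ c ∈ cubeCenters, ∀ T ∈ localCells c, ∀ u ∈ T.verts,
      (∃ T' ∈ localCells c, u ∉ T'.verts ∧ T.verts.erase u ⊆ T'.verts) ∨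
      ∃ n ∈ faceNormals, dot n u < 1 ∧ ∀ v ∈ T.verts.erase u, dot n v = 1 := by decide +kernel

theorem exists_matching_cell : ∀ c ∈ cubeCenters, ∀ n ∈ faceNormals, ∀ k ∈ [2, -4],
    c + k • n ∈ cubeCenters → ∀ T ∈ localCells c, ∃ T' ∈ localCells (c + k • n),
      ∀ u ∈ T.verts, dot n u = 1 → u - 2 • n ∈ T'.verts := by decide +kernel

/-! ### Support forms and walls -/

theorem mem_placedVerts {c p : Lattice} {T : Cell} : p ∈ placedVerts c T ↔ p - c ∈ T.verts := by
  simp [placedVerts, Finset.mem_map, ← eq_sub_iff_add_eq']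

/-- The form of a cell recentered at `c`, plus the tangent form of `quad` at `c`. -/
def placedForm (c : Lattice) (T : Cell) : LatticeForm where
  grad := (8 : ℤ) • c + (2 * coordSum c) • (1, 1, 1) + T.form.grad
  const := T.form.const - dot T.form.grad c - quad c

theorem placedForm_eval (c p : Lattice) (T : Cell) :
    (placedForm c T).eval p = quad p - quad (p - c) + T.form.eval (p - c) := by
  simp only [LatticeForm.eval, dot, placedForm, coordSum, quad, Prod.fst_add, Prod.snd_add,
    Prod.fst_sub, Prod.snd_sub, Prod.smul_fst, Prod.smul_snd, smul_eq_mul]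
  ring

/-- The height function on the vertices whose lower convex hull induces the triangulation. -/
def height (p : Lattice) : ℤ := quad p - depth p

theorem placedForm_eval_eq_height {c p : Lattice} {T : Cell} (hc : c ∈ cubeCenters)
    (hT : T ∈ localCells c) (hp : p ∈ placedVerts c T) : (placedForm c T).eval p = height p := by
  have h := eval_form_eq c hc T hT _ (mem_placedVerts.1 hp)
  rw [add_sub_cancel] at h
  rw [placedForm_eval, h, height]
  ring

theorem placedForm_eval_lt_height {c p : Lattice} {T : Cell} (hc : c ∈ cubeCenters)
    (hT : T ∈ localCells c) (hp : p ∈ vertices) (hpT : p ∉ placedVerts c T) :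
    (placedForm c T).eval p < height p := by
  have h := (eval_form_lt c hc T hT p hp).resolve_right (mem_placedVerts.not.1 hpT)
  rw [placedForm_eval, height]
  linarith

/-- An affine form nonnegative on the cube, and zero on its face with outer normal `n`. -/
def wall (n : Lattice) : LatticeForm := ⟨-n, 3 + 3 * coordSum n⟩

theorem wall_eval_add (n c u : Lattice) : (wall n).eval (c + u) = (wall n).eval c - dot n u := by
  simp only [LatticeForm.eval, dot, wall, Prod.fst_neg, Prod.snd_neg, Prod.fst_add, Prod.snd_add]
  ring

theorem wall_eval_nonneg : ∀ n ∈ faceNormals, ∀ p ∈ vertices, 0 ≤ (wall n).eval p := by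
  decide +kernel

theorem cubeCenter_inner_or_outer : ∀ n ∈ faceNormals, ∀ c ∈ cubeCenters,
    (c + (2 : ℤ) • n ∈ cubeCenters ∧ 1 < (wall n).eval c) ∨
    (c + (-4 : ℤ) • n ∈ cubeCenters ∧ (wall n).eval c = 1) := by
  decide +kernel

theorem neg_mem_faceNormals : ∀ n ∈ faceNormals, -n ∈ faceNormals := by decide

theorem dot_self_faceNormal : ∀ n ∈ faceNormals, dot n n = 1 := by decide

theorem placed_ridge {c p : Lattice} {T : Cell} (hc : c ∈ cubeCenters) (hT : T ∈ localCells c)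
    (hp : p ∈ placedVerts c T) :
    (∃ c' ∈ cubeCenters, ∃ T' ∈ localCells c', p ∉ placedVerts c' T' ∧
      ∀ q ∈ placedVerts c T, q ≠ p → q ∈ placedVerts c' T') ∨
    ∃ n ∈ faceNormals, 0 < (wall n).eval p ∧
      ∀ q ∈ placedVerts c T, q ≠ p → (wall n).eval q = 0 := by
  have herase {q : Lattice} (hq : q ∈ placedVerts c T) (hqp : q ≠ p) :
      q - c ∈ T.verts.erase (p - c) :=
    Finset.mem_erase.2 ⟨sub_left_injective.ne hqp, mem_placedVerts.1 hq⟩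
  have heval (n q : Lattice) : (wall n).eval q = (wall n).eval c - dot n (q - c) := by
    rw [← wall_eval_add, add_sub_cancel]
  rcases ridge_interior_or_subset_cubeFace c hc T hT _ (mem_placedVerts.1 hp) with
    ⟨T', hT', hpT', hsub⟩ | ⟨n, hn, hpn, hqn⟩
  · exact .inl ⟨c, hc, T', hT', mem_placedVerts.not.2 hpT',
      fun q hq hqp => mem_placedVerts.2 (hsub (herase hq hqp))⟩
  rcases cubeCenter_inner_or_outer n hn c hc with ⟨hc', -⟩ | ⟨-, hwall⟩
  · obtain ⟨T', hT', hmatch⟩ := exists_matching_cell c hc n hn 2 (by simp) hc' T hT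
    refine .inl ⟨_, hc', T', hT', fun hpT' => ?_, fun q hq hqp => ?_⟩
    · have hle := dot_faceNormal_le (-n) (neg_mem_faceNormals n hn) _ hc' T' hT' _
        (mem_placedVerts.1 hpT')
      have hnn := dot_self_faceNormal n hn
      simp only [dot, Prod.fst_neg, Prod.snd_neg, Prod.fst_sub, Prod.snd_sub, Prod.fst_add,
        Prod.snd_add, Prod.smul_fst, Prod.smul_snd, smul_eq_mul] at hle hnn hpn
      linarith
    · have hq' := hmatch _ (mem_placedVerts.1 hq) (hqn _ (herase hq hqp))
      rw [sub_sub] at hq'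
      exact mem_placedVerts.2 hq'
  · exact .inr ⟨n, hn, by rw [heval, hwall]; linarith,
      fun q hq hqp => by rw [heval, hwall, hqn _ (herase hq hqp), sub_self]⟩

/-! ### Realization in Euclidean space -/

/-- Euclidean three-space. -/
abbrev Space : Type := EuclideanSpace ℝ (Fin 3)

/-- The point of `ℝ³` represented by a lattice point, whose coordinates are in units of `1/6`. -/
noncomputable def latticePoint : Lattice ↪ Space where
  toFun p := pt3 (p.1 / 6) (p.2.1 / 6) (p.2.2 / 6)
  inj' p q hpq := by
    have h0 := congrArg (fun x : Space => x 0) hpq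
    have h1 := congrArg (fun x : Space => x 1) hpq
    have h2 := congrArg (fun x : Space => x 2) hpq
    simp only [pt3, WithLp.equiv_symm_apply, Matrix.cons_val_zero, Matrix.cons_val_one,
      Matrix.cons_val, ne_eq, OfNat.ofNat_ne_zero, not_false_eq_true, div_left_inj',
      Int.cast_inj] at h0 h1 h2
    ext <;> assumption

theorem latticePoint_mk (a b c : ℤ) :
    latticePoint (a, b, c) = pt3 (a / 6) (b / 6) (c / 6) := rfl

theorem latticePoint_apply (p : Lattice) (l : Fin 3) :
    latticePoint p l = (dot (unit l) p : ℝ) / 6 := by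
  fin_cases l <;> simp [latticePoint, pt3, dot, unit]

theorem latticePoint_sub (p q : Lattice) :
    latticePoint (p - q) = latticePoint p - latticePoint q := by
  ext l
  simp only [PiLp.sub_apply, latticePoint_apply, dot, Prod.fst_sub, Prod.snd_sub]
  push_cast
  ring

theorem latticePoint_neg (p : Lattice) : latticePoint (-p) = -latticePoint p := by
  ext l
  simp only [PiLp.neg_apply, latticePoint_apply, dot, Prod.fst_neg, Prod.snd_neg]
  push_cast
  ring

theorem latticePoint_six_smul_unit (l : Fin 3) :
    latticePoint ((6 : ℤ) • unit l) = EuclideanSpace.single l 1 := by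
  ext m
  rw [latticePoint_apply]
  fin_cases l <;> fin_cases m <;> simp [dot, unit]

namespace LatticeForm

/-- The affine map on `ℝ³` whose value at `latticePoint p` is `f.eval p`. -/
noncomputable def toAffineMap (f : LatticeForm) : Space →ᵃ[ℝ] ℝ :=
  (6 * f.grad.1 : ℝ) • (EuclideanSpace.projₗ 0 : Space →ₗ[ℝ] ℝ).toAffineMap +
  (6 * f.grad.2.1 : ℝ) • (EuclideanSpace.projₗ 1 : Space →ₗ[ℝ] ℝ).toAffineMap +
  (6 * f.grad.2.2 : ℝ) • (EuclideanSpace.projₗ 2 : Space →ₗ[ℝ] ℝ).toAffineMap +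
  AffineMap.const ℝ Space (f.const : ℝ)

theorem toAffineMap_apply (f : LatticeForm) (x : Space) :
    f.toAffineMap x =
      6 * (f.grad.1 * x 0 + f.grad.2.1 * x 1 + f.grad.2.2 * x 2) + f.const := by
  simp only [toAffineMap, AffineMap.coe_add, AffineMap.coe_smul, LinearMap.coe_toAffineMap,
    AffineMap.coe_const, Pi.add_apply, Pi.smul_apply, PiLp.projₗ_apply, smul_eq_mul,
    Function.const_apply]
  ring

theorem toAffineMap_latticePoint (f : LatticeForm) (p : Lattice) :
    f.toAffineMap (latticePoint p) = f.eval p := by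
  simp only [toAffineMap_apply, latticePoint_apply, eval, dot, unit, Matrix.cons_val_zero,
    Matrix.cons_val_one, Matrix.cons_val, one_mul, zero_mul, add_zero, zero_add]
  push_cast
  ring

end LatticeForm

/-- The tetrahedra of the triangulation: a subcube, given by its center, and a cell in it. -/
abbrev CellIndex : Type := (c : {c // c ∈ cubeCenters}) × {T // T ∈ localCells c}

instance (c : Lattice) : Finite {T // T ∈ localCells c} := List.finite_toSet _

instance : Nonempty CellIndex := ⟨⟨⟨(1, 1, 1), by decide⟩, ⟨_, List.mem_cons_self⟩⟩⟩

theorem exists_cellIndex {P : Lattice → Cell → Prop} :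
    (∃ i : CellIndex, P i.1 i.2) ↔ ∃ c ∈ cubeCenters, ∃ T ∈ localCells c, P c T := by
  simp only [Sigma.exists, Subtype.exists, exists_prop]

/-- The regular triangulation of the unit cube induced by `height`. -/
noncomputable def triangulation : RegularTriangulation ℝ CellIndex Space where
  facet i := (placedVerts i.1 i.2).map latticePoint
  support i := (placedForm i.1 i.2).toAffineMap
  walls := {f | ∃ n ∈ faceNormals, (wall n).toAffineMap = f}
  card_facet i := by
    rw [Finset.card_map, placedVerts, Finset.card_map, card_verts _ i.1.2 _ i.2.2,
      finrank_euclideanSpace_fin]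
  support_eq {i j _} hpi hpj := by
    obtain ⟨p, hpi', rfl⟩ := Finset.mem_map.1 hpi
    rw [Finset.mem_map' latticePoint] at hpj
    rw [LatticeForm.toAffineMap_latticePoint, LatticeForm.toAffineMap_latticePoint,
      placedForm_eval_eq_height i.1.2 i.2.2 hpi', placedForm_eval_eq_height j.1.2 j.2.2 hpj]
  support_lt {i j _} hpi hpj := by
    obtain ⟨p, hpi', rfl⟩ := Finset.mem_map.1 hpi
    rw [Finset.mem_map' latticePoint] at hpj
    rw [LatticeForm.toAffineMap_latticePoint, LatticeForm.toAffineMap_latticePoint, Int.cast_lt,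
      placedForm_eval_eq_height i.1.2 i.2.2 hpi']
    exact placedForm_eval_lt_height j.1.2 j.2.2 (placedVerts_subset_vertices _ i.1.2 _ i.2.2 hpi')
      hpj
  wall_nonneg {i _ _} hp hf := by
    obtain ⟨p, hp', rfl⟩ := Finset.mem_map.1 hp
    obtain ⟨n, hn, rfl⟩ := hf
    rw [LatticeForm.toAffineMap_latticePoint]
    exact_mod_cast wall_eval_nonneg n hn p (placedVerts_subset_vertices _ i.1.2 _ i.2.2 hp')
  ridge {i _} hp := by
    obtain ⟨p, hp', rfl⟩ := Finset.mem_map.1 hp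
    simp only [Finset.forall_mem_map, Finset.mem_map', latticePoint.injective.ne_iff,
      Set.mem_ofPred_eq, exists_exists_and_eq_and, LatticeForm.toAffineMap_latticePoint,
      Int.cast_pos, Int.cast_eq_zero]
    exact (placed_ridge i.1.2 i.2.2 hp').imp_left exists_cellIndex.2

theorem toAffineMap_wall_unit (l : Fin 3) (x : Space) :
    (wall (unit l)).toAffineMap x = 6 * (1 - x l) := by
  rw [LatticeForm.toAffineMap_apply]
  fin_cases l <;> simp [wall, unit, coordSum] <;> ring

theorem toAffineMap_wall_neg_unit (l : Fin 3) (x : Space) :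
    (wall (-unit l)).toAffineMap x = 6 * x l := by
  rw [LatticeForm.toAffineMap_apply]
  fin_cases l <;> simp [wall, unit, coordSum]

theorem mem_faceNormals {n : Lattice} : n ∈ faceNormals ↔ ∃ l, n = unit l ∨ n = -unit l := by
  simp [faceNormals, Fin.exists_fin_succ, or_assoc]

theorem space_triangulation : triangulation.complex.space = unitCube := by
  rw [RegularTriangulation.complex_space]
  ext x
  have hwalls : (∀ f ∈ triangulation.walls, 0 ≤ f x) ↔
      ∀ l, 0 ≤ (wall (unit l)).toAffineMap x ∧ 0 ≤ (wall (-unit l)).toAffineMap x := by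
    simp only [triangulation, mem_faceNormals, Set.mem_ofPred_eq, forall_exists_index, and_imp]
    exact ⟨fun h l => ⟨h _ _ l (.inl rfl) rfl, h _ _ l (.inr rfl) rfl⟩,
      by rintro h _ _ l (rfl | rfl) rfl; exacts [(h l).1, (h l).2]⟩
  rw [Set.mem_ofPred_eq, hwalls]
  refine forall_congr' fun l => ?_
  rw [toAffineMap_wall_unit, toAffineMap_wall_neg_unit, Set.mem_Icc]
  constructor <;> rintro ⟨h₁, h₂⟩ <;> constructor <;> linarith

/-- A nonempty set of lattice points spanning a face of a tetrahedron of the triangulation. -/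
def IsFace (t : Finset Lattice) : Prop :=
  t.Nonempty ∧ ∃ c ∈ cubeCenters, ∃ T ∈ localCells c, t ⊆ placedVerts c T

theorem faces_triangulation :
    triangulation.complex.faces = Finset.map latticePoint '' {t | IsFace t} := by
  ext s
  rw [RegularTriangulation.mem_complex_faces]
  constructor
  · rintro ⟨hs, i, hsi⟩
    obtain ⟨t, ht, rfl⟩ := Finset.subset_map_iff.1 hsi
    exact ⟨t, ⟨Finset.map_nonempty.1 hs, i.1, i.1.2, i.2, i.2.2, ht⟩, rfl⟩
  · rintro ⟨t, ⟨ht, htT⟩, rfl⟩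
    obtain ⟨i, hi⟩ := exists_cellIndex.2 htT
    exact ⟨ht.map, i, Finset.map_subset_map.2 hi⟩

/-! ### Vertices -/

theorem card_vertices : vertices.card = 77 := by decide +kernel

theorem card_centerVertices : centerVertices.card = 13 := by decide +kernel

theorem card_vertices_face :
    ∀ l, ∀ a ∈ [0, 6], {p ∈ vertices | dot (unit l) p = a}.card = 16 := by decide +kernel

theorem vertices_triangulation :
    triangulation.complex.vertices = latticePoint '' vertices := by
  ext x
  rw [RegularTriangulation.mem_complex_vertices]
  simp only [triangulation, Finset.mem_map, Set.mem_image, Finset.mem_coe]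
  constructor
  · rintro ⟨i, p, hp, rfl⟩
    exact ⟨p, placedVerts_subset_vertices _ i.1.2 _ i.2.2 hp, rfl⟩
  · rintro ⟨p, hp, rfl⟩
    obtain ⟨i, hi⟩ := exists_cellIndex.2 (exists_mem_placedVerts p hp)
    exact ⟨i, p, hi, rfl⟩

theorem thirdGrid_eq_image : thirdGrid = latticePoint '' gridVertices := by
  have hcoord (a : ℤ) : a ∈ ({0, 2, 4, 6} : Finset ℤ) ↔ ∃ i : ℕ, i ≤ 3 ∧ a = 2 * i := by
    simp only [Finset.mem_insert, Finset.mem_singleton]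
    exact ⟨fun ha => ⟨(a / 2).toNat, by omega, by omega⟩, by rintro ⟨i, hi, rfl⟩; omega⟩
  have hdiv (i : ℕ) : ((2 * i : ℤ) : ℝ) / 6 = i / 3 := by push_cast; ring
  ext x
  simp only [thirdGrid, gridVertices, Set.mem_ofPred_eq, Set.mem_image, Finset.mem_coe,
    Finset.mem_product, hcoord]
  constructor
  · rintro ⟨i, j, k, hi, hj, hk, rfl⟩
    refine ⟨(2 * i, 2 * j, 2 * k), ⟨⟨i, hi, rfl⟩, ⟨j, hj, rfl⟩, k, hk, rfl⟩, ?_⟩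
    simp only [latticePoint_mk, hdiv]
  · rintro ⟨⟨_, _, _⟩, ⟨⟨i, hi, rfl⟩, ⟨j, hj, rfl⟩, k, hk, rfl⟩, rfl⟩
    exact ⟨i, j, k, hi, hj, hk, by simp only [latticePoint_mk, hdiv]⟩

theorem image_centerVertices_subset : latticePoint '' centerVertices ⊆ centerGrid := by
  have hcoord {a : ℤ} (ha : a ∈ ({1, 3, 5} : Finset ℤ)) : ∃ i : ℕ, i ≤ 2 ∧ a = 2 * i + 1 := by
    simp only [Finset.mem_insert, Finset.mem_singleton] at ha
    exact ⟨(a / 2).toNat, by omega, by omega⟩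
  rintro _ ⟨⟨a, b, c⟩, hp, rfl⟩
  have hcenter := (Finset.mem_filter.1 hp).1
  simp only [cubeCenters, Finset.mem_product] at hcenter
  obtain ⟨i, hi, rfl⟩ := hcoord hcenter.1
  obtain ⟨j, hj, rfl⟩ := hcoord hcenter.2.1
  obtain ⟨k, hk, rfl⟩ := hcoord hcenter.2.2
  exact ⟨i, j, k, hi, hj, hk, by simp [latticePoint_mk]⟩

theorem ncard_image_latticePoint (A : Finset Lattice) : (latticePoint '' A).ncard = A.card := by
  rw [Set.ncard_image_of_injective _ latticePoint.injective, Set.ncard_coe_finset]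

theorem ncard_vertices_face (l : Fin 3) {v : ℝ} (hv : v ∈ ({0, 1} : Set ℝ)) :
    {x ∈ triangulation.complex.vertices | x l = v}.ncard = 16 := by
  obtain ⟨a, ha, rfl⟩ : ∃ a ∈ [(0 : ℤ), 6], (a / 6 : ℝ) = v := by
    rcases hv with rfl | rfl
    · exact ⟨0, by simp⟩
    · exact ⟨6, by simp⟩
  rw [← card_vertices_face l a ha, ← ncard_image_latticePoint, vertices_triangulation]
  congr 1
  ext x
  simp only [Set.mem_ofPred_eq, Set.mem_image, Finset.mem_coe, Finset.mem_filter]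
  constructor
  · rintro ⟨⟨p, hp, rfl⟩, hpa⟩
    rw [latticePoint_apply] at hpa
    exact ⟨p, ⟨hp, by exact_mod_cast (div_left_inj' (by norm_num)).1 hpa⟩, rfl⟩
  · rintro ⟨p, ⟨hp, rfl⟩, rfl⟩
    exact ⟨⟨p, hp, rfl⟩, latticePoint_apply p l⟩

/-! ### Face numbers -/

/-- Base-seven digits, separating the points of `[0, 6]³`. Off that cube it is meaningless, as
`Int.toNat` truncates. -/
def code (p : Lattice) : ℕ := (p.1 + 7 * p.2.1 + 49 * p.2.2).toNat

theorem eq_of_code_eq : ∀ p ∈ vertices, ∀ q ∈ vertices, code p = code q → p = q := by decide +kernel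

/-- The `k`-element faces of all cells, listed with repetition when shared by several cells. -/
def latticeFaces (k : ℕ) : Multiset (Finset Lattice) :=
  cubeCenters.1.bind fun c => (localCells c : Multiset Cell).bind fun T =>
    ((placedVerts c T).powersetCard k).1

/-- The encoding of a set of vertices as a binary number, which lets the distinct faces be counted
with natural number arithmetic. -/
def bitmask (s : Finset Lattice) : ℕ := ∑ p ∈ s, 2 ^ code p

theorem card_bitmask_latticeFaces_four :
    ((latticeFaces 4).map bitmask).toFinset.card = 202 := by decide +kernel

theorem card_bitmask_latticeFaces_three :
    ((latticeFaces 3).map bitmask).toFinset.card = 458 := by decide +kernel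

theorem card_bitmask_latticeFaces_two :
    ((latticeFaces 2).map bitmask).toFinset.card = 332 := by decide +kernel

theorem IsFace.subset_vertices {t : Finset Lattice} (ht : IsFace t) : t ⊆ vertices := by
  obtain ⟨-, c, hc, T, hT, htT⟩ := ht
  exact htT.trans (placedVerts_subset_vertices c hc T hT)

theorem mem_latticeFaces {k : ℕ} {t : Finset Lattice} :
    t ∈ latticeFaces k ↔
      (∃ c ∈ cubeCenters, ∃ T ∈ localCells c, t ⊆ placedVerts c T) ∧ t.card = k := by
  simp only [latticeFaces, Multiset.mem_bind, Finset.mem_val, Multiset.mem_coe,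
    Finset.mem_powersetCard, ← and_assoc, exists_and_right]

theorem isFace_and_card_eq_iff {k : ℕ} (hk : k ≠ 0) {t : Finset Lattice} :
    IsFace t ∧ t.card = k ↔ t ∈ latticeFaces k := by
  rw [mem_latticeFaces, IsFace, and_assoc, and_iff_right_iff_imp]
  rintro ⟨-, rfl⟩
  exact Finset.card_ne_zero.1 hk

theorem injOn_bitmask : Set.InjOn bitmask vertices.powerset :=
  injOn_sum_pow le_rfl fun p hp q hq => eq_of_code_eq p hp q hq

theorem ncard_faces_triangulation {k : ℕ} (hk : k ≠ 0) :
    {s ∈ triangulation.complex.faces | s.card = k}.ncard =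
      ((latticeFaces k).map bitmask).toFinset.card := by
  have himage : {s ∈ triangulation.complex.faces | s.card = k} =
      Finset.map latticePoint '' (latticeFaces k).toFinset := by
    rw [faces_triangulation]
    ext s
    simp only [Set.mem_image, Set.mem_ofPred_eq, Finset.mem_coe, Multiset.mem_toFinset,
      ← isFace_and_card_eq_iff hk]
    constructor
    · rintro ⟨⟨t, ht, rfl⟩, hcard⟩
      exact ⟨t, ⟨ht, Finset.card_map latticePoint ▸ hcard⟩, rfl⟩
    · rintro ⟨t, ⟨ht, hcard⟩, rfl⟩
      exact ⟨⟨t, ht, rfl⟩, (Finset.card_map latticePoint).trans hcard⟩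
  rw [himage, Set.ncard_image_of_injective _ (Finset.map_injective latticePoint),
    Set.ncard_coe_finset, Multiset.toFinset_map, Finset.card_image_of_injOn]
  exact injOn_bitmask.mono fun t ht => Finset.mem_powerset.2
    ((isFace_and_card_eq_iff hk).2 (Multiset.mem_toFinset.1 ht)).1.subset_vertices

/-! ### Diameters -/

theorem dot_sub_self_le : ∀ c ∈ cubeCenters, ∀ T ∈ localCells c,
    ∀ u ∈ T.verts, ∀ v ∈ T.verts, dot (u - v) (u - v) ≤ 8 := by decide +kernel

theorem dist_latticePoint (p q : Lattice) :
    dist (latticePoint p) (latticePoint q) = √(dot (p - q) (p - q)) / 6 := by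
  rw [dist_eq_norm, ← latticePoint_sub, EuclideanSpace.norm_eq]
  have hsum : ∑ l, ‖latticePoint (p - q) l‖ ^ 2 = dot (p - q) (p - q) / 6 ^ 2 := by
    simp only [Real.norm_eq_abs, sq_abs, latticePoint_apply, Fin.sum_univ_three, dot, unit,
      Matrix.cons_val_zero, Matrix.cons_val_one, Matrix.cons_val, one_mul, zero_mul, add_zero,
      zero_add]
    push_cast
    ring
  rw [hsum, Real.sqrt_div' _ (by positivity), Real.sqrt_sq (by norm_num)]

theorem diam_face_le {s : Finset Space} (hs : s ∈ triangulation.complex.faces) :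
    Metric.diam (convexHull ℝ (s : Set Space)) ≤ √2 / 3 := by
  rw [faces_triangulation] at hs
  obtain ⟨t, ⟨-, c, hc, T, hT, htT⟩, rfl⟩ := hs
  rw [convexHull_diam]
  refine Metric.diam_le_of_forall_dist_le (by positivity) ?_
  simp only [Finset.mem_coe, Finset.forall_mem_map]
  intro p hp q hq
  have hsq : dot (p - q) (p - q) ≤ 8 := by
    have h := dot_sub_self_le c hc T hT _ (mem_placedVerts.1 (htT hp)) _
      (mem_placedVerts.1 (htT hq))
    rwa [sub_sub_sub_cancel_right] at h
  calc dist (latticePoint p) (latticePoint q) = √(dot (p - q) (p - q)) / 6 :=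
        dist_latticePoint p q
    _ ≤ √8 / 6 := by gcongr; exact_mod_cast hsq
    _ = √(2 ^ 2 * 2) / 6 := by norm_num
    _ = √2 / 3 := by
      rw [Real.sqrt_mul (by positivity), Real.sqrt_sq zero_le_two]
      ring

/-! ### Translations between opposite faces -/

theorem exists_placedVerts_sub_six_smul {c n : Lattice} {T : Cell} (hc : c ∈ cubeCenters)
    (hT : T ∈ localCells c) (hn : n ∈ faceNormals) {s : Finset Lattice} (hne : s.Nonempty)
    (hs : s ⊆ placedVerts c T)
    (hwall : ∀ p ∈ s, (wall n).eval p = 0) :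
    ∃ c' ∈ cubeCenters, ∃ T' ∈ localCells c', ∀ p ∈ s, p - (6 : ℤ) • n ∈ placedVerts c' T' := by
  have hdot {p : Lattice} (hp : p ∈ s) : dot n (p - c) = (wall n).eval c := by
    have := wall_eval_add n c (p - c)
    rw [add_sub_cancel, hwall p hp] at this
    linarith
  obtain ⟨p₀, hp₀⟩ := hne
  have hle : (wall n).eval c ≤ 1 :=
    hdot hp₀ ▸ dot_faceNormal_le n hn c hc T hT _ (mem_placedVerts.1 (hs hp₀))
  rcases cubeCenter_inner_or_outer n hn c hc with ⟨-, hlt⟩ | ⟨hc', hone⟩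
  · exact absurd hle hlt.not_ge
  obtain ⟨T', hT', hmatch⟩ := exists_matching_cell c hc n hn (-4) (by simp) hc' T hT
  refine ⟨_, hc', T', hT', fun p hp => mem_placedVerts.2 ?_⟩
  convert hmatch _ (mem_placedVerts.1 (hs hp)) ((hdot hp).trans hone) using 1
  module

theorem image_sub_mem_faces {s : Finset Space} (hs : s ∈ triangulation.complex.faces)
    {n : Lattice} (hn : n ∈ faceNormals) (hwall : ∀ x ∈ s, (wall n).toAffineMap x = 0) :
    s.image (· - latticePoint ((6 : ℤ) • n)) ∈ triangulation.complex.faces := by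
  rw [faces_triangulation] at hs ⊢
  obtain ⟨t, ⟨hne, c, hc, T, hT, htT⟩, rfl⟩ := hs
  simp only [Finset.forall_mem_map, LatticeForm.toAffineMap_latticePoint, Int.cast_eq_zero] at hwall
  obtain ⟨c', hc', T', hT', hsub⟩ := exists_placedVerts_sub_six_smul hc hT hn hne htT hwall
  have hface : IsFace (t.image (· - (6 : ℤ) • n)) :=
    ⟨hne.image _, c', hc', T', hT', Finset.image_subset_iff.2 hsub⟩
  refine ⟨_, hface, ?_⟩
  simp only [Finset.map_eq_image, Finset.image_image]
  congr 1
  ext1 p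
  exact latticePoint_sub p _

theorem bijOn_translation (l : Fin 3) :
    Set.BijOn (fun s : Finset Space => s.image (fun x => x + EuclideanSpace.single l (1 : ℝ)))
      {s | s ∈ triangulation.complex.faces ∧ ∀ x ∈ s, x l = 0}
      {s | s ∈ triangulation.complex.faces ∧ ∀ x ∈ s, x l = 1} := by
  refine Set.InvOn.bijOn
    (f' := fun s => s.image (fun x => x - EuclideanSpace.single l (1 : ℝ))) ?_ ?_ ?_
  · constructor <;> intro s _ <;> simp only [Finset.image_image, Function.comp_def,
      add_sub_cancel_right, sub_add_cancel, Finset.image_id']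
  · rintro s ⟨hs, hsl⟩
    refine ⟨?_, ?_⟩
    · have h := image_sub_mem_faces hs (mem_faceNormals.2 ⟨l, .inr rfl⟩) fun x hx => by
        rw [toAffineMap_wall_neg_unit, hsl x hx, mul_zero]
      simpa only [smul_neg, latticePoint_neg, latticePoint_six_smul_unit, sub_neg_eq_add] using h
    · exact Finset.forall_mem_image.2 fun x hx => by simp [hsl x hx]
  · rintro s ⟨hs, hsl⟩
    refine ⟨?_, ?_⟩
    · have h := image_sub_mem_faces hs (mem_faceNormals.2 ⟨l, .inl rfl⟩) fun x hx => by
        rw [toAffineMap_wall_unit, hsl x hx, sub_self, mul_zero]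
      simpa only [latticePoint_six_smul_unit] using h
    · exact Finset.forall_mem_image.2 fun x hx => by simp [hsl x hx]

end CubeTriangulation

open CubeTriangulation in
/-- There is a `77`-vertex finite geometric simplicial complex triangulating the unit cube
`[0,1]³`, with `64` vertices the points `(i/3, j/3, k/3)`, `0 ≤ i,j,k ≤ 3`, and the
remaining `13` vertices among the `27` points `((2i+1)/6, (2j+1)/6, (2k+1)/6)`,
`0 ≤ i,j,k ≤ 2`; each closed `2`-face of the cube contains exactly `16` vertices; there are
exactly `202` tetrahedra, `458` triangles and `332` edges; every simplex has diameter at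
most `√2/3`; and for each coordinate direction `l`, translation by the standard basis
vector `e_l` maps the simplices contained in the face `{x_l = 0}` bijectively onto the
simplices contained in the opposite face `{x_l = 1}`. -/
theorem cube_triangulation_77_vertices :
    ∃ K : Geometry.SimplicialComplex ℝ (EuclideanSpace ℝ (Fin 3)),
      K.faces.Finite ∧
      -- (a) the space of the complex is the unit cube
      K.space = unitCube ∧
      -- (b) 77 vertices: the 64 grid points together with 13 of the 27 centers
      K.vertices.ncard = 77 ∧
      (∃ C : Set (EuclideanSpace ℝ (Fin 3)), C ⊆ centerGrid ∧ C.ncard = 13 ∧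
        K.vertices = thirdGrid ∪ C) ∧
      -- (c) each closed 2-dimensional face of the cube contains exactly 16 vertices
      (∀ l : Fin 3, ∀ v ∈ ({0, 1} : Set ℝ),
        {x ∈ K.vertices | x l = v}.ncard = 16) ∧
      -- (d) face numbers
      {s ∈ K.faces | s.card = 4}.ncard = 202 ∧
      {s ∈ K.faces | s.card = 3}.ncard = 458 ∧
      {s ∈ K.faces | s.card = 2}.ncard = 332 ∧
      -- (e) every simplex has diameter at most `√2/3`
      (∀ s ∈ K.faces, Metric.diam (convexHull ℝ (s : Set (EuclideanSpace ℝ (Fin 3))))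
        ≤ Real.sqrt 2 / 3) ∧
      -- (f) translation by `e_l` maps the simplices in the face `{x_l = 0}` bijectively
      -- onto the simplices in the face `{x_l = 1}`
      (∀ l : Fin 3, Set.BijOn
        (fun s : Finset (EuclideanSpace ℝ (Fin 3)) =>
          s.image (fun x => x + EuclideanSpace.single l (1 : ℝ)))
        {s | s ∈ K.faces ∧ ∀ x ∈ s, x l = 0}
        {s | s ∈ K.faces ∧ ∀ x ∈ s, x l = 1}) := by
  refine ⟨triangulation.complex, triangulation.finite_complex_faces, space_triangulation, ?_,
    ⟨latticePoint '' centerVertices, image_centerVertices_subset, ?_, ?_⟩,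
    fun l _ hv => ncard_vertices_face l hv, ?_, ?_, ?_, fun _ hs => diam_face_le hs,
    bijOn_translation⟩
  · rw [vertices_triangulation, ncard_image_latticePoint, card_vertices]
  · rw [ncard_image_latticePoint, card_centerVertices]
  · rw [vertices_triangulation, vertices, Finset.coe_union, Set.image_union, thirdGrid_eq_image]
  · rw [ncard_faces_triangulation (by decide), card_bitmask_latticeFaces_four]
  · rw [ncard_faces_triangulation (by decide), card_bitmask_latticeFaces_three]
  · rw [ncard_faces_triangulation (by decide), card_bitmask_latticeFaces_two]
end

section
/- Let 0 < r₀ < r₀ + ε < 1/2. There exist smooth functions h₁, h₂, h₃ defined for (r, φ) ∈ (0, r₀+ε] × ℝ and 2π-periodic in φ, such that: (i) h₁(r,φ) = 1, h₂(r,φ) = r² and h₃(r,φ) = 0 whenever 0 < r ≤ r₀; (ii) there is δ > 0 such that for all r ∈ (r₀+ε−δ, r₀+ε] one has h₁(r,φ) = cos(2πx), h₂(r,φ) = (x − 1/2)·sin(2πx) and h₃(r,φ) = sin(φ)·sin(2πx), where x = r·cos(φ) + 1/2; and (iii) for all (r,φ) with 0 < r ≤ r₀+ε, (h₁·∂_r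 h₂ − h₂·∂_r h₁) − (h₁·∂_φ h₃ − h₃·∂_φ h₁) ≠ 0. -/
open Real

/-!
Regard `w = h₁ + i h₂` as a family of plane curves in `r`. Then `h₁ ∂_r h₂ - h₂ ∂_r h₁` is the
speed at which `w` sweeps area, so for `h₃ = 0` the contact condition says that `w` turns
counterclockwise. The prescribed curve is `1 + i r²` near the core and `-γ(r cos φ)`, with
`γ(t) = cos (2πt) + i t sin (2πt)`, near the boundary. Both turn counterclockwise, the second one
only weakly: it stands still at `cos φ = 0`, where the contact condition relies on `h₃`.

For `t ∈ (-1/2, 1/2)` the curve `γ` stays in the slit plane with argument in `[0, π)`, so one can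
interpolate logarithms: for `r₀ ≤ r ≤ a` pass from `1 + i r²` to `e^{iθ(r)} γ(r cos φ)`, where
`θ ∈ [π - 1/2, π]` is increasing. The target has the larger argument, so the interpolation turns
counterclockwise as well. On `[a, b]` the slow rotation `θ` runs up to `π` while `h₃` is switched
on; it keeps the condition strict until `h₃` takes over.
-/

namespace ContactInterpolation

open scoped ContDiff

/-- The coefficient of `dr ∧ dφ ∧ dz` in `β ∧ dβ` for `β = h₁ dz + h₂ dφ + h₃ dr`, where the
coefficients of `β` do not depend on `z`. -/
noncomputable def contactDensity (h₁ h₂ h₃ : ℝ → ℝ → ℝ) (r φ : ℝ) : ℝ :=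
  (h₁ r φ * deriv (fun r' => h₂ r' φ) r - h₂ r φ * deriv (fun r' => h₁ r' φ) r) -
    (h₁ r φ * deriv (fun φ' => h₃ r φ') φ - h₃ r φ * deriv (fun φ' => h₁ r φ') φ)

/-! ### Logarithmic interpolation of plane curves -/

/-- The angular momentum `x y' - y x'` of a plane curve `w = x + i y`, that is, twice the rate at
which it sweeps area about the origin. -/
noncomputable def angularMomentum (w : ℝ → ℂ) (x : ℝ) : ℝ :=
  (w x).re * deriv (fun s => (w s).im) x - (w x).im * deriv (fun s => (w s).re) x

theorem angularMomentum_cexp {F : ℝ → ℂ} {x : ℝ} (hF : DifferentiableAt ℝ F x) :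
    angularMomentum (fun s => Complex.exp (F s)) x =
      Complex.normSq (Complex.exp (F x)) * (deriv F x).im := by
  have hexp := hF.hasDerivAt.cexp
  have hre : HasDerivAt (fun s => (Complex.exp (F s)).re) (Complex.exp (F x) * deriv F x).re x :=
    Complex.reCLM.hasFDerivAt.comp_hasDerivAt x hexp
  have him : HasDerivAt (fun s => (Complex.exp (F s)).im) (Complex.exp (F x) * deriv F x).im x :=
    Complex.imCLM.hasFDerivAt.comp_hasDerivAt x hexp
  rw [angularMomentum, hre.deriv, him.deriv, Complex.mul_re, Complex.mul_im,
    Complex.normSq_apply]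
  ring

/-- The point at parameter `μ` on the segment from `log y` to `log z + θ i`. Its exponential moves
from `y` to `z` rotated by `θ`; the angle is kept separate because `Complex.log` only sees it
modulo `2π`. -/
noncomputable def logInterp (μ θ : ℝ) (y z : ℂ) : ℂ :=
  (1 - μ) * Complex.log y + μ * (Complex.log z + θ * Complex.I)

theorem cexp_logInterp_zero (θ : ℝ) {y : ℂ} (z : ℂ) (hy : y ≠ 0) :
    Complex.exp (logInterp 0 θ y z) = y := by
  simp [logInterp, Complex.exp_log hy]

theorem cexp_logInterp_one (θ : ℝ) (y : ℂ) {z : ℂ} (hz : z ≠ 0) :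
    Complex.exp (logInterp 1 θ y z) = z * Complex.exp (θ * Complex.I) := by
  simp [logInterp, Complex.exp_add, Complex.exp_log hz]

theorem contDiffAt_cexp_logInterp {E : Type*} [NormedAddCommGroup E] [NormedSpace ℝ E]
    {n : WithTop ℕ∞} {μ θ : E → ℝ} {y z : E → ℂ} {p : E}
    (hμ : ContDiffAt ℝ n μ p) (hθ : ContDiffAt ℝ n θ p)
    (hy : ContDiffAt ℝ n y p) (hz : ContDiffAt ℝ n z p)
    (hyp : y p ∈ Complex.slitPlane) (hzp : z p ∈ Complex.slitPlane) :
    ContDiffAt ℝ n (fun q => Complex.exp (logInterp (μ q) (θ q) (y q) (z q))) p := by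
  have ofReal {f : E → ℝ} (hf : ContDiffAt ℝ n f p) : ContDiffAt ℝ n (fun q => (f q : ℂ)) p :=
    Complex.ofRealCLM.contDiff.contDiffAt.comp p hf
  have clog {f : E → ℂ} (hf : ContDiffAt ℝ n f p) (hfp : f p ∈ Complex.slitPlane) :
      ContDiffAt ℝ n (fun q => Complex.log (f q)) p :=
    ((Complex.contDiffAt_log hfp).restrict_scalars ℝ).comp p hf
  exact (((contDiffAt_const.sub (ofReal hμ)).mul (clog hy hyp)).add
    ((ofReal hμ).mul ((clog hz hzp).add ((ofReal hθ).mul contDiffAt_const)))).cexp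

section Derivative

variable {μ θ : ℝ → ℝ} {y z : ℝ → ℂ} {μ' θ' : ℝ} {y' z' : ℂ} {x : ℝ}

theorem hasDerivAt_logInterp (hμ : HasDerivAt μ μ' x) (hθ : HasDerivAt θ θ' x)
    (hy : HasDerivAt y y' x) (hz : HasDerivAt z z' x)
    (hyx : y x ∈ Complex.slitPlane) (hzx : z x ∈ Complex.slitPlane) :
    HasDerivAt (fun s => logInterp (μ s) (θ s) (y s) (z s))
      ((1 - μ x) * (y' / y x) + μ x * (z' / z x + θ' * Complex.I) +
        μ' * (Complex.log (z x) + θ x * Complex.I - Complex.log (y x))) x := by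
  have h := ((hμ.ofReal_comp.const_sub 1).mul (hy.clog_real hyx)).add
    (hμ.ofReal_comp.mul ((hz.clog_real hzx).add (hθ.ofReal_comp.mul_const Complex.I)))
  refine h.congr_deriv ?_
  simp only [Pi.add_apply]
  ring

/-- Moving towards a larger argument can only increase the angular velocity, so the terms coming
from `μ'` may be dropped. -/
theorem le_angularMomentum_cexp_logInterp (hμ : HasDerivAt μ μ' x) (hθ : HasDerivAt θ θ' x)
    (hy : HasDerivAt y y' x) (hz : HasDerivAt z z' x)
    (hyx : y x ∈ Complex.slitPlane) (hzx : z x ∈ Complex.slitPlane)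
    (hμ' : 0 ≤ μ') (harg : (y x).arg ≤ (z x).arg + θ x) :
    Complex.normSq (Complex.exp (logInterp (μ x) (θ x) (y x) (z x))) *
        ((1 - μ x) * (y' / y x).im + μ x * ((z' / z x).im + θ')) ≤
      angularMomentum (fun s => Complex.exp (logInterp (μ s) (θ s) (y s) (z s))) x := by
  have hlog := hasDerivAt_logInterp hμ hθ hy hz hyx hzx
  rw [angularMomentum_cexp hlog.differentiableAt, hlog.deriv]
  refine mul_le_mul_of_nonneg_left ?_ (Complex.normSq_nonneg _)
  have hangle : 0 ≤ μ' * ((z x).arg + θ x - (y x).arg) := mul_nonneg hμ' (sub_nonneg.2 harg)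
  rw [← Complex.ofReal_one, ← Complex.ofReal_sub]
  simp only [Complex.add_im, Complex.sub_im, Complex.im_ofReal_mul, Complex.log_im,
    Complex.I_im, mul_one]
  linarith

end Derivative

/-! ### The two curves -/

/-- `h₁ + i h₂` for the form `dz + r² dφ` near the core `r = 0`. -/
noncomputable def coreCurve (r : ℝ) : ℂ := 1 + (r ^ 2 : ℝ) * Complex.I

@[simp]
theorem coreCurve_re (r : ℝ) : (coreCurve r).re = 1 := by
  simp [coreCurve, -Complex.ofReal_pow]

@[simp]
theorem coreCurve_im (r : ℝ) : (coreCurve r).im = r ^ 2 := by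
  simp [coreCurve, -Complex.ofReal_pow]

theorem coreCurve_mem_slitPlane (r : ℝ) : coreCurve r ∈ Complex.slitPlane := by
  simp [Complex.mem_slitPlane_iff]

theorem arg_coreCurve_le (r : ℝ) : (coreCurve r).arg ≤ π / 2 :=
  (le_abs_self _).trans (Complex.abs_arg_le_pi_div_two_iff.2 (by simp))

theorem contDiff_coreCurve : ContDiff ℝ ∞ coreCurve :=
  contDiff_const.add
    ((Complex.ofRealCLM.contDiff.comp (contDiff_id.pow 2)).mul contDiff_const)

theorem hasDerivAt_coreCurve (r : ℝ) :
    HasDerivAt coreCurve ((2 * r : ℝ) * Complex.I) r := by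
  have hsq : HasDerivAt (fun s : ℝ => s ^ 2) (2 * r) r := by simpa using hasDerivAt_pow 2 r
  exact (hsq.ofReal_comp.mul_const Complex.I).const_add 1

theorem im_deriv_div_coreCurve (r : ℝ) :
    ((2 * r : ℝ) * Complex.I / coreCurve r).im = 2 * r / (1 + r ^ 4) := by
  rw [Complex.div_im, Complex.normSq_apply, coreCurve_re, coreCurve_im]
  simp only [Complex.im_ofReal_mul, Complex.re_ofReal_mul, Complex.I_re, Complex.I_im]
  ring

/-- Minus `h₁ + i h₂` for the form `cos (2πx) dz + sin (2πx) dy` in polar coordinates around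
`(1/2, 1/2)`, as a function of `t = x - 1/2 = r cos φ`. -/
noncomputable def torusCurve (t : ℝ) : ℂ :=
  (cos (2 * π * t) : ℝ) + (t * sin (2 * π * t) : ℝ) * Complex.I

@[simp]
theorem torusCurve_re (t : ℝ) : (torusCurve t).re = cos (2 * π * t) := by
  simp only [torusCurve, Complex.add_re, Complex.re_ofReal_mul, Complex.ofReal_re, Complex.I_re,
    mul_zero, add_zero]

@[simp]
theorem torusCurve_im (t : ℝ) : (torusCurve t).im = t * sin (2 * π * t) := by
  simp only [torusCurve, Complex.add_im, Complex.im_ofReal_mul, Complex.ofReal_im, Complex.I_im,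
    mul_one, zero_add]

theorem mul_sin_pos {x : ℝ} (hx₀ : x ≠ 0) (hx : |x| < π) : 0 < x * sin x := by
  obtain ⟨hlower, hupper⟩ := abs_lt.1 hx
  rcases hx₀.lt_or_gt with hneg | hpos
  · exact mul_pos_of_neg_of_neg hneg (sin_neg_of_neg_of_neg_pi_lt hneg hlower)
  · exact mul_pos hpos (sin_pos_of_pos_of_lt_pi hpos hupper)

theorem torusCurve_im_pos {t : ℝ} (ht₀ : t ≠ 0) (ht : |t| < 1 / 2) : 0 < (torusCurve t).im := by
  have habs : |2 * π * t| < π := by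
    rw [abs_mul, abs_of_pos two_pi_pos]
    nlinarith [pi_pos]
  have hpos : 0 < 2 * π * (torusCurve t).im := by
    simpa only [torusCurve_im, mul_assoc] using
      mul_sin_pos (mul_ne_zero two_pi_pos.ne' ht₀) habs
  exact pos_of_mul_pos_right hpos two_pi_pos.le

theorem torusCurve_mem_slitPlane {t : ℝ} (ht : |t| < 1 / 2) :
    torusCurve t ∈ Complex.slitPlane := by
  rw [Complex.mem_slitPlane_iff]
  rcases eq_or_ne t 0 with rfl | ht₀
  · simp
  · exact .inr (torusCurve_im_pos ht₀ ht).ne'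

theorem arg_torusCurve_nonneg {t : ℝ} (ht : |t| < 1 / 2) : 0 ≤ (torusCurve t).arg := by
  rw [Complex.arg_nonneg_iff]
  rcases eq_or_ne t 0 with rfl | ht₀
  · simp
  · exact (torusCurve_im_pos ht₀ ht).le

theorem contDiff_torusCurve : ContDiff ℝ ∞ torusCurve := by
  have hre : ContDiff ℝ ∞ fun t : ℝ => cos (2 * π * t) := by fun_prop
  have him : ContDiff ℝ ∞ fun t : ℝ => t * sin (2 * π * t) := by fun_prop
  exact (Complex.ofRealCLM.contDiff.comp hre).add
    ((Complex.ofRealCLM.contDiff.comp him).mul contDiff_const)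

/-- The derivative of `torusCurve`. -/
noncomputable def torusCurveDeriv (t : ℝ) : ℂ :=
  (-sin (2 * π * t) * (2 * π) : ℝ) +
    (sin (2 * π * t) + t * (cos (2 * π * t) * (2 * π)) : ℝ) * Complex.I

theorem hasDerivAt_torusCurve (t : ℝ) : HasDerivAt torusCurve (torusCurveDeriv t) t := by
  have hlin : HasDerivAt (fun s : ℝ => 2 * π * s) (2 * π) t := hasDerivAt_const_mul _
  refine (hlin.cos.ofReal_comp.add
    (((hasDerivAt_id t).mul hlin.sin).ofReal_comp.mul_const Complex.I)).congr_deriv ?_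
  simp only [torusCurveDeriv, id, one_mul]

/-- The angular momentum of `torusCurve`. -/
noncomputable def torusMomentum (t : ℝ) : ℝ := sin (2 * π * t) * cos (2 * π * t) + 2 * π * t

theorem im_torusCurveDeriv_div (t : ℝ) :
    (torusCurveDeriv t / torusCurve t).im = torusMomentum t / Complex.normSq (torusCurve t) := by
  rw [Complex.div_im, torusCurve_re, torusCurve_im, ← sub_div]
  congr 1
  simp only [torusCurveDeriv, torusMomentum, Complex.add_im, Complex.add_re, Complex.im_ofReal_mul,
    Complex.re_ofReal_mul, Complex.I_re, Complex.I_im, Complex.ofReal_re, Complex.ofReal_im]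
  linear_combination (2 * π * t) * sin_sq_add_cos_sq (2 * π * t)

theorem mul_sin_add_self_nonneg (x : ℝ) : 0 ≤ x * (sin x + x) := by
  have habs : |x * sin x| ≤ x ^ 2 := by
    rw [abs_mul, ← sq_abs, sq]
    exact mul_le_mul_of_nonneg_left abs_sin_le_abs (abs_nonneg x)
  linarith [(abs_le.1 habs).1]

theorem mul_torusMomentum_nonneg {r : ℝ} (hr : 0 < r) (u : ℝ) : 0 ≤ u * torusMomentum (r * u) := by
  have hscale : 0 ≤ 8 * π * r * (u * torusMomentum (r * u)) := by
    calc 0 ≤ 2 * (2 * π * (r * u)) *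
          (sin (2 * (2 * π * (r * u))) + 2 * (2 * π * (r * u))) := mul_sin_add_self_nonneg _
      _ = 8 * π * r * (u * torusMomentum (r * u)) := by rw [sin_two_mul, torusMomentum]; ring
  exact nonneg_of_mul_nonneg_right hscale (by positivity)

theorem abs_mul_cos_lt_half {r : ℝ} (hr : 0 < r) (hr' : r < 1 / 2) (φ : ℝ) :
    |r * cos φ| < 1 / 2 := by
  rw [abs_mul, abs_of_pos hr]
  exact (mul_le_of_le_one_right hr.le (abs_cos_le_one φ)).trans_lt hr'

/-! ### Cutoff and rotation angle -/

/-- A smooth increasing function that is `0` on `(-∞, p]` and `1` on `[q, ∞)`. -/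
noncomputable def cutoff (p q x : ℝ) : ℝ := smoothTransition ((x - p) / (q - p))

/-- The angle `θ(r)`, equal to `π - (b - r)` up to `r = a` and to `π` from `r = b` on. -/
noncomputable def turnAngle (a b r : ℝ) : ℝ := π - (b - r) * (1 - cutoff a b r)

section Cutoff

variable {p q : ℝ}

theorem cutoff_nonneg (p q x : ℝ) : 0 ≤ cutoff p q x := smoothTransition.nonneg _

theorem cutoff_le_one (p q x : ℝ) : cutoff p q x ≤ 1 := smoothTransition.le_one _

theorem cutoff_of_le (hpq : p ≤ q) {x : ℝ} (hx : x ≤ p) : cutoff p q x = 0 :=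
  smoothTransition.zero_of_nonpos
    (div_nonpos_of_nonpos_of_nonneg (sub_nonpos.2 hx) (sub_nonneg.2 hpq))

theorem cutoff_of_ge (hpq : p < q) {x : ℝ} (hx : q ≤ x) : cutoff p q x = 1 :=
  smoothTransition.one_of_one_le ((one_le_div (sub_pos.2 hpq)).2 (by linarith))

theorem contDiff_cutoff (p q : ℝ) : ContDiff ℝ ∞ (cutoff p q) :=
  smoothTransition.contDiff.comp ((contDiff_id.sub contDiff_const).div_const _)

theorem hasDerivAt_cutoff (p q x : ℝ) : HasDerivAt (cutoff p q) (deriv (cutoff p q) x) x :=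
  ((contDiff_cutoff p q).differentiable (by simp) x).hasDerivAt

theorem deriv_cutoff_nonneg (hpq : p ≤ q) (x : ℝ) : 0 ≤ deriv (cutoff p q) x := by
  refine Monotone.deriv_nonneg fun x₁ x₂ hx => smoothTransition.monotone ?_
  have := sub_nonneg.2 hpq
  gcongr

theorem deriv_cutoff_of_ge (hpq : p < q) {x : ℝ} (hx : q ≤ x) : deriv (cutoff p q) x = 0 := by
  refine IsLocalMax.deriv_eq_zero (.of_forall fun s => ?_)
  rw [cutoff_of_ge hpq hx]
  exact cutoff_le_one p q s

end Cutoff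

section TurnAngle

variable {a b : ℝ}

theorem turnAngle_of_ge (hab : a < b) {r : ℝ} (hr : b ≤ r) : turnAngle a b r = π := by
  simp [turnAngle, cutoff_of_ge hab hr]

theorem turnAngle_le_pi (hab : a < b) (r : ℝ) : turnAngle a b r ≤ π := by
  rcases le_total b r with hr | hr
  · exact (turnAngle_of_ge hab hr).le
  · exact sub_le_self _ (mul_nonneg (sub_nonneg.2 hr) (sub_nonneg.2 (cutoff_le_one a b r)))

theorem pi_sub_half_le_turnAngle (hab : a < b) (hb : b ≤ 1 / 2) {r : ℝ} (hr : 0 ≤ r) :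
    π - 1 / 2 ≤ turnAngle a b r := by
  rcases le_total b r with hbr | hbr
  · rw [turnAngle_of_ge hab hbr]
    linarith
  · have : (b - r) * (1 - cutoff a b r) ≤ b - r :=
      mul_le_of_le_one_right (sub_nonneg.2 hbr) (sub_le_self _ (cutoff_nonneg a b r))
    rw [turnAngle]
    linarith

theorem contDiff_turnAngle (a b : ℝ) : ContDiff ℝ ∞ (turnAngle a b) :=
  contDiff_const.sub
    ((contDiff_const.sub contDiff_id).mul (contDiff_const.sub (contDiff_cutoff a b)))

theorem hasDerivAt_turnAngle (a b r : ℝ) :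
    HasDerivAt (turnAngle a b) ((1 - cutoff a b r) + (b - r) * deriv (cutoff a b) r) r := by
  refine ((((hasDerivAt_id r).const_sub b).mul
    ((hasDerivAt_cutoff a b r).const_sub 1)).const_sub π).congr_deriv ?_
  simp only [id]
  ring

theorem one_sub_cutoff_le_deriv_turnAngle (hab : a < b) (r : ℝ) :
    1 - cutoff a b r ≤ deriv (turnAngle a b) r := by
  rw [(hasDerivAt_turnAngle a b r).deriv, le_add_iff_nonneg_right]
  rcases le_total b r with hr | hr
  · simp [deriv_cutoff_of_ge hab hr]
  · exact mul_nonneg (sub_nonneg.2 hr) (deriv_cutoff_nonneg hab.le r)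

end TurnAngle

/-! ### The interpolating form -/

/-- The function `h₁ + i h₂` of the interpolating form: `coreCurve` up to the radius `r₀`,
a rotated `torusCurve` from `a` on, and `-torusCurve` from `b` on. -/
noncomputable def profile (r₀ a b r φ : ℝ) : ℂ :=
  Complex.exp
    (logInterp (cutoff r₀ a r) (turnAngle a b r) (coreCurve r) (torusCurve (r * cos φ)))

/-- The coefficient `h₁` of `dz` in the interpolating form. -/
noncomputable def dzCoeff (r₀ a b r φ : ℝ) : ℝ := (profile r₀ a b r φ).re

/-- The coefficient `h₂` of `dφ` in the interpolating form. -/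
noncomputable def dphiCoeff (r₀ a b r φ : ℝ) : ℝ := (profile r₀ a b r φ).im

/-- The coefficient `h₃` of `dr` in the interpolating form, switched on between `a` and `b`. -/
noncomputable def drCoeff (a b r φ : ℝ) : ℝ :=
  -(cutoff a b r * (sin φ * sin (2 * π * (r * cos φ))))

section Profile

variable {r₀ a b r : ℝ}

theorem profile_add_two_pi (r₀ a b r φ : ℝ) :
    profile r₀ a b r (φ + 2 * π) = profile r₀ a b r φ := by
  simp only [profile, cos_add_two_pi]

theorem drCoeff_add_two_pi (a b r φ : ℝ) : drCoeff a b r (φ + 2 * π) = drCoeff a b r φ := by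
  simp only [drCoeff, cos_add_two_pi, sin_add_two_pi]

theorem profile_of_le (h₀ : r₀ ≤ a) (hr : r ≤ r₀) (φ : ℝ) :
    profile r₀ a b r φ = coreCurve r := by
  rw [profile, cutoff_of_le h₀ hr,
    cexp_logInterp_zero _ _ (Complex.slitPlane_ne_zero (coreCurve_mem_slitPlane r))]

theorem profile_of_ge (h₀ : r₀ < a) (har : a ≤ r) (hr : 0 < r) (hr' : r < 1 / 2) (φ : ℝ) :
    profile r₀ a b r φ =
      torusCurve (r * cos φ) * Complex.exp (turnAngle a b r * Complex.I) := by
  rw [profile, cutoff_of_ge h₀ har, cexp_logInterp_one _ _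
    (Complex.slitPlane_ne_zero (torusCurve_mem_slitPlane (abs_mul_cos_lt_half hr hr' φ)))]

theorem profile_eq_neg_torusCurve (h₀ : r₀ < a) (hab : a < b) (hbr : b ≤ r) (hr : 0 < r)
    (hr' : r < 1 / 2) (φ : ℝ) : profile r₀ a b r φ = -torusCurve (r * cos φ) := by
  rw [profile_of_ge h₀ (hab.le.trans hbr) hr hr', turnAngle_of_ge hab hbr, Complex.exp_pi_mul_I,
    mul_neg_one]

theorem drCoeff_of_le (hab : a ≤ b) (hr : r ≤ a) (φ : ℝ) : drCoeff a b r φ = 0 := by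
  rw [drCoeff, cutoff_of_le hab hr, zero_mul, neg_zero]

theorem drCoeff_of_ge (hab : a < b) (hr : b ≤ r) (φ : ℝ) :
    drCoeff a b r φ = -(sin φ * sin (2 * π * (r * cos φ))) := by
  rw [drCoeff, cutoff_of_ge hab hr, one_mul]

theorem contDiffOn_profile (r₀ a b : ℝ) {R : ℝ} (hR : R < 1 / 2) :
    ContDiffOn ℝ ∞ (fun p : ℝ × ℝ => profile r₀ a b p.1 p.2) (Set.Ioc 0 R ×ˢ Set.univ) := by
  rintro p ⟨⟨hr, hrR⟩, -⟩
  have ht : ContDiff ℝ ∞ fun q : ℝ × ℝ => q.1 * cos q.2 := by fun_prop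
  exact (contDiffAt_cexp_logInterp
    ((contDiff_cutoff r₀ a).comp contDiff_fst).contDiffAt
    ((contDiff_turnAngle a b).comp contDiff_fst).contDiffAt
    (contDiff_coreCurve.comp contDiff_fst).contDiffAt
    (contDiff_torusCurve.comp ht).contDiffAt
    (coreCurve_mem_slitPlane _)
    (torusCurve_mem_slitPlane
      (abs_mul_cos_lt_half hr (hrR.trans_lt hR) p.2))).contDiffWithinAt

theorem contDiff_drCoeff (a b : ℝ) :
    ContDiff ℝ ∞ (fun p : ℝ × ℝ => drCoeff a b p.1 p.2) := by
  have hangular : ContDiff ℝ ∞ fun p : ℝ × ℝ => sin p.2 * sin (2 * π * (p.1 * cos p.2)) := by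
    fun_prop
  exact (((contDiff_cutoff a b).comp contDiff_fst).mul hangular).neg

/-! ### The contact condition -/

theorem le_angularMomentum_profile (h₀ : r₀ ≤ a) (hab : a < b) (hb : b ≤ 1 / 2)
    (hr : 0 < r) (hr' : r < 1 / 2) (φ : ℝ) :
    Complex.normSq (profile r₀ a b r φ) *
        ((1 - cutoff r₀ a r) * (2 * r / (1 + r ^ 4)) +
          cutoff r₀ a r * (cos φ * torusMomentum (r * cos φ) /
            Complex.normSq (torusCurve (r * cos φ)) + deriv (turnAngle a b) r)) ≤
      angularMomentum (fun s => profile r₀ a b s φ) r := by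
  have ht := abs_mul_cos_lt_half hr hr' φ
  have htorus : HasDerivAt (fun s => torusCurve (s * cos φ))
      ((cos φ : ℝ) * torusCurveDeriv (r * cos φ)) r :=
    (hasDerivAt_torusCurve _).scomp r (hasDerivAt_mul_const (cos φ))
  have htorus_im : ((cos φ : ℝ) * torusCurveDeriv (r * cos φ) / torusCurve (r * cos φ)).im =
      cos φ * torusMomentum (r * cos φ) / Complex.normSq (torusCurve (r * cos φ)) := by
    rw [mul_div_assoc, Complex.im_ofReal_mul, im_torusCurveDeriv_div, mul_div_assoc]
  have harg : (coreCurve r).arg ≤ (torusCurve (r * cos φ)).arg + turnAngle a b r := by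
    linarith [arg_coreCurve_le r, arg_torusCurve_nonneg ht, pi_sub_half_le_turnAngle hab hb hr.le,
      pi_gt_three]
  have h := le_angularMomentum_cexp_logInterp (hasDerivAt_cutoff r₀ a r)
    (hasDerivAt_turnAngle a b r).differentiableAt.hasDerivAt
    (hasDerivAt_coreCurve r) htorus (coreCurve_mem_slitPlane r) (torusCurve_mem_slitPlane ht)
    (deriv_cutoff_nonneg h₀ r) harg
  rwa [im_deriv_div_coreCurve, htorus_im] at h

theorem contactDensity_pos_of_cutoff_eq_zero (h₀ : r₀ ≤ a) (hab : a < b) (hb : b ≤ 1 / 2)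
    (hr : 0 < r) (hr' : r < 1 / 2) (hcut : cutoff a b r = 0) (φ : ℝ) :
    0 < contactDensity (dzCoeff r₀ a b) (dphiCoeff r₀ a b) (drCoeff a b) r φ := by
  have hdr (φ' : ℝ) : drCoeff a b r φ' = 0 := by rw [drCoeff, hcut, zero_mul, neg_zero]
  simp only [contactDensity, hdr, deriv_const, mul_zero, zero_mul, sub_zero]
  refine lt_of_lt_of_le ?_ (le_angularMomentum_profile h₀ hab hb hr hr' φ)
  refine mul_pos (Complex.normSq_pos.2 (Complex.exp_ne_zero _)) ?_
  have hcore : 0 < 2 * r / (1 + r ^ 4) := by positivity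
  have htorus : 0 < cos φ * torusMomentum (r * cos φ) /
      Complex.normSq (torusCurve (r * cos φ)) + deriv (turnAngle a b) r := by
    have hturn := one_sub_cutoff_le_deriv_turnAngle hab r
    have := div_nonneg (mul_torusMomentum_nonneg hr (cos φ))
      (Complex.normSq_nonneg (torusCurve (r * cos φ)))
    linarith
  exact convex_Ioi (0 : ℝ) hcore htorus (sub_nonneg.2 (cutoff_le_one r₀ a r))
    (cutoff_nonneg r₀ a r) (sub_add_cancel _ _)

theorem le_angularMomentum_profile_of_ge (h₀ : r₀ < a) (hab : a < b) (hb : b ≤ 1 / 2)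
    (har : a ≤ r) (hr : 0 < r) (hr' : r < 1 / 2) (φ : ℝ) :
    cos φ * torusMomentum (r * cos φ) ≤ angularMomentum (fun s => profile r₀ a b s φ) r := by
  refine le_trans ?_ (le_angularMomentum_profile h₀.le hab hb hr hr' φ)
  have hnormSq : 0 < Complex.normSq (torusCurve (r * cos φ)) := Complex.normSq_pos.2
    (Complex.slitPlane_ne_zero (torusCurve_mem_slitPlane (abs_mul_cos_lt_half hr hr' φ)))
  have hrot : Complex.normSq (Complex.exp (turnAngle a b r * Complex.I)) = 1 := by
    rw [Complex.normSq_eq_norm_sq, Complex.norm_exp_ofReal_mul_I, one_pow]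
  have hturn : 0 ≤ deriv (turnAngle a b) r :=
    (sub_nonneg.2 (cutoff_le_one a b r)).trans (one_sub_cutoff_le_deriv_turnAngle hab r)
  rw [profile_of_ge h₀ har hr hr', map_mul, hrot, mul_one, cutoff_of_ge h₀ har, sub_self,
    zero_mul, zero_add, one_mul, mul_add, mul_div_cancel₀ _ hnormSq.ne']
  exact le_add_of_nonneg_right (mul_nonneg hnormSq.le hturn)

theorem angular_term_rotated_torusCurve (c θ r φ : ℝ) :
    (torusCurve (r * cos φ) * Complex.exp (θ * Complex.I)).re *
        deriv (fun ψ => -(c * (sin ψ * sin (2 * π * (r * cos ψ))))) φ -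
      -(c * (sin φ * sin (2 * π * (r * cos φ)))) *
        deriv (fun ψ => (torusCurve (r * cos ψ) * Complex.exp (θ * Complex.I)).re) φ =
    c * (cos θ * (2 * π * r - cos φ * torusMomentum (r * cos φ)) +
      sin θ * (r * sin (2 * π * (r * cos φ)) ^ 2)) := by
  have hre (ψ : ℝ) : (torusCurve (r * cos ψ) * Complex.exp (θ * Complex.I)).re =
      cos (2 * π * (r * cos ψ)) * cos θ - r * cos ψ * sin (2 * π * (r * cos ψ)) * sin θ := by
    rw [Complex.mul_re, torusCurve_re, torusCurve_im, Complex.exp_ofReal_mul_I_re,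
      Complex.exp_ofReal_mul_I_im]
  have ht : HasDerivAt (fun ψ => r * cos ψ) (r * -sin φ) φ := (hasDerivAt_cos φ).const_mul r
  have hs := ht.const_mul (2 * π)
  have hdr : HasDerivAt (fun ψ => -(c * (sin ψ * sin (2 * π * (r * cos ψ))))) _ φ :=
    (((hasDerivAt_sin φ).mul hs.sin).const_mul c).neg
  have hdz : HasDerivAt (fun ψ => cos (2 * π * (r * cos ψ)) * cos θ -
      r * cos ψ * sin (2 * π * (r * cos ψ)) * sin θ) _ φ :=
    (hs.cos.mul_const (cos θ)).sub ((ht.mul hs.sin).mul_const (sin θ))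
  simp only [hre]
  rw [hdr.deriv, hdz.deriv, torusMomentum]
  linear_combination
    (c * cos θ * (2 * π * r) * sin φ ^ 2) * sin_sq_add_cos_sq (2 * π * (r * cos φ)) +
    (c * cos θ * (2 * π * r) + c * sin θ * r * sin (2 * π * (r * cos φ)) ^ 2) *
      sin_sq_add_cos_sq φ

theorem sin_add_two_pi_mul_cos_neg {θ : ℝ} (hθ : π - 1 / 2 ≤ θ) (hθ' : θ ≤ π) :
    sin θ + 2 * π * cos θ < 0 := by
  have hcos : 1 / 2 ≤ cos (π - θ) := by
    nlinarith [one_sub_sq_div_two_le_cos (x := π - θ)]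
  rw [cos_pi_sub] at hcos
  nlinarith [sin_le_one θ, pi_gt_three]

theorem contactDensity_pos_of_cutoff_pos (h₀ : r₀ < a) (hab : a < b) (hb : b ≤ 1 / 2)
    (hr : 0 < r) (hr' : r < 1 / 2) (hcut : 0 < cutoff a b r) (φ : ℝ) :
    0 < contactDensity (dzCoeff r₀ a b) (dphiCoeff r₀ a b) (drCoeff a b) r φ := by
  have har : a ≤ r := by
    by_contra! hra
    exact hcut.ne' (cutoff_of_le hab.le hra.le)
  have hradial := le_angularMomentum_profile_of_ge h₀ hab hb har hr hr' φ
  have hangular := angular_term_rotated_torusCurve (cutoff a b r) (turnAngle a b r) r φ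
  simp only [← profile_of_ge h₀ har hr hr'] at hangular
  refine sub_pos.2 (lt_of_lt_of_le (hangular.trans_lt ?_) hradial)
  have hθ := pi_sub_half_le_turnAngle hab hb hr.le
  have hθ' := turnAngle_le_pi hab r
  have hsin : 0 ≤ sin (turnAngle a b r) :=
    sin_nonneg_of_nonneg_of_le_pi (by linarith [pi_gt_three]) hθ'
  have hmom := mul_torusMomentum_nonneg hr (cos φ)
  have hgain : cutoff a b r * r * (2 * π * cos (turnAngle a b r) +
      sin (turnAngle a b r) * sin (2 * π * (r * cos φ)) ^ 2) < 0 := by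
    refine mul_neg_of_pos_of_neg (mul_pos hcut hr) ?_
    linarith [sin_add_two_pi_mul_cos_neg hθ hθ',
      mul_le_of_le_one_right hsin (sin_sq_le_one (2 * π * (r * cos φ)))]
  have hloss : cutoff a b r * -cos (turnAngle a b r) * (cos φ * torusMomentum (r * cos φ)) ≤
      cos φ * torusMomentum (r * cos φ) := by
    refine mul_le_of_le_one_left hmom ?_
    nlinarith [neg_one_le_cos (turnAngle a b r), cutoff_le_one a b r]
  linarith

theorem contactDensity_pos (h₀ : r₀ < a) (hab : a < b) (hb : b ≤ 1 / 2)
    (hr : 0 < r) (hr' : r < 1 / 2) (φ : ℝ) :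
    0 < contactDensity (dzCoeff r₀ a b) (dphiCoeff r₀ a b) (drCoeff a b) r φ := by
  rcases (cutoff_nonneg a b r).eq_or_lt' with hcut | hcut
  · exact contactDensity_pos_of_cutoff_eq_zero h₀.le hab hb hr hr' hcut φ
  · exact contactDensity_pos_of_cutoff_pos h₀ hab hb hr hr' hcut φ

end Profile

end ContactInterpolation

open ContactInterpolation

/-- There exist smooth functions `h₁, h₂, h₃` of `(r, φ) ∈ (0, r₀+ε] × ℝ`, `2π`-periodic
in `φ`, which agree with `(1, r², 0)` for `r ≤ r₀`, agree near `r = r₀+ε` with the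
coefficients of the contact form `α₀ = cos(2πx) dz + sin(2πx) dy` written in polar
coordinates (where `x = r cos φ + 1/2`), and satisfy the contact condition
`(h₁ ∂_r h₂ − h₂ ∂_r h₁) − (h₁ ∂_φ h₃ − h₃ ∂_φ h₁) ≠ 0` throughout. -/
theorem contact_form_interpolation_on_torus (r₀ ε : ℝ)
    (hr₀ : 0 < r₀) (hε : r₀ < r₀ + ε) (hhalf : r₀ + ε < 1 / 2) :
    ∃ h₁ h₂ h₃ : ℝ → ℝ → ℝ,
      -- smoothness on `(0, r₀+ε] × ℝ`
      ContDiffOn ℝ (⊤ : ℕ∞) (fun p : ℝ × ℝ => h₁ p.1 p.2) (Set.Ioc 0 (r₀ + ε) ×ˢ Set.univ) ∧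
      ContDiffOn ℝ (⊤ : ℕ∞) (fun p : ℝ × ℝ => h₂ p.1 p.2) (Set.Ioc 0 (r₀ + ε) ×ˢ Set.univ) ∧
      ContDiffOn ℝ (⊤ : ℕ∞) (fun p : ℝ × ℝ => h₃ p.1 p.2) (Set.Ioc 0 (r₀ + ε) ×ˢ Set.univ) ∧
      -- `2π`-periodicity in `φ`
      (∀ r φ : ℝ, h₁ r (φ + 2 * π) = h₁ r φ) ∧
      (∀ r φ : ℝ, h₂ r (φ + 2 * π) = h₂ r φ) ∧
      (∀ r φ : ℝ, h₃ r (φ + 2 * π) = h₃ r φ) ∧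
      -- (i) standard form for `0 < r ≤ r₀`
      (∀ φ : ℝ, ∀ r ∈ Set.Ioc 0 r₀,
        h₁ r φ = 1 ∧ h₂ r φ = r ^ 2 ∧ h₃ r φ = 0) ∧
      -- (ii) boundary values near `r = r₀ + ε`
      (∃ δ > 0, ∀ φ : ℝ, ∀ r ∈ Set.Ioc (r₀ + ε - δ) (r₀ + ε),
        h₁ r φ = Real.cos (2 * π * (r * Real.cos φ + 1 / 2)) ∧
        h₂ r φ = ((r * Real.cos φ + 1 / 2) - 1 / 2) *
          Real.sin (2 * π * (r * Real.cos φ + 1 / 2)) ∧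
        h₃ r φ = Real.sin φ * Real.sin (2 * π * (r * Real.cos φ + 1 / 2))) ∧
      -- (iii) the contact condition
      (∀ φ : ℝ, ∀ r ∈ Set.Ioc 0 (r₀ + ε),
        (h₁ r φ * deriv (fun r' => h₂ r' φ) r - h₂ r φ * deriv (fun r' => h₁ r' φ) r) -
        (h₁ r φ * deriv (fun φ' => h₃ r φ') φ - h₃ r φ * deriv (fun φ' => h₁ r φ') φ)
          ≠ 0) := by
  set a := r₀ + ε / 3 with ha
  set b := r₀ + 2 * ε / 3 with hb
  have h₀ : r₀ < a := by linarith
  have hab : a < b := by linarith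
  have hprofile := contDiffOn_profile r₀ a b hhalf
  refine ⟨dzCoeff r₀ a b, dphiCoeff r₀ a b, drCoeff a b,
    Complex.reCLM.contDiff.comp_contDiffOn hprofile,
    Complex.imCLM.contDiff.comp_contDiffOn hprofile, (contDiff_drCoeff a b).contDiffOn,
    fun r φ => congrArg Complex.re (profile_add_two_pi r₀ a b r φ),
    fun r φ => congrArg Complex.im (profile_add_two_pi r₀ a b r φ), drCoeff_add_two_pi a b,
    fun φ r hr => ?_, ⟨ε / 3, by linarith, fun φ r hr => ?_⟩,
    fun φ r hr => (contactDensity_pos h₀ hab (by linarith) hr.1 (by linarith [hr.2]) φ).ne'⟩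
  · rw [dzCoeff, dphiCoeff, profile_of_le h₀.le hr.2, coreCurve_re, coreCurve_im]
    exact ⟨rfl, rfl, drCoeff_of_le hab.le (hr.2.trans h₀.le) φ⟩
  · have hbr : b ≤ r := by linarith [hr.1]
    have hπ : 2 * π * (r * cos φ + 1 / 2) = 2 * π * (r * cos φ) + π := by ring
    rw [dzCoeff, dphiCoeff,
      profile_eq_neg_torusCurve h₀ hab hbr (by linarith) (by linarith [hr.2]),
      drCoeff_of_ge hab hbr, hπ, cos_add_pi, sin_add_pi]
    simp
end

section
/- For every R with 0 < R < 1 there exist infinitely differentiable functions h₁, h₂ : ℝ → ℝ such that: (i) h₁(r) = −cos(πr/R) and h₂(r) = r²·sin(πr/R) for all r ∈ [0, R]; (ii) there is δ > 0 such that h₁(r) = 1 and h₂(r) = −r² for all r ∈ (1−δ, 1]; and (iii) h₁(r)·h₂′(r) − h₂(r)·h₁′(r) ≠ 0 for all r ∈ (0, 1]. -/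
open Real

/-!
Write the pair as `(h₁, h₂) = ρ · (-cos θ, r² sin θ)`. Since `h₁ h₂′ − h₂ h₁′` is quadratic under
multiplication of the pair by a function, it equals `-ρ² r (r θ′ + sin 2θ)`, and only the angle `θ`
matters for the contact condition. On `[0, R]` the data are `ρ = 1`, `θ = πr/R`, and there
`r θ′ + sin 2θ = θ + sin 2θ > 0`. The end data `(1, -r²)` are `ρ = √2`, `θ = 5π/4`. So after `r = R`
one lets `θ` increase from `π` to `5π/4` and levels it off: there `sin 2θ ≥ 0`, with `θ′ > 0` before
`θ` becomes constant and `sin 2θ = 1` afterwards.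
-/

section SmoothStep

variable {a b x : ℝ}

/-- The smooth cutoff that vanishes up to `a` and equals `1` from `b` on, for `a < b`. -/
noncomputable def smoothStep (a b x : ℝ) : ℝ :=
  smoothTransition ((x - a) / (b - a))

theorem contDiff_smoothStep {n : ℕ∞} : ContDiff ℝ n (smoothStep a b) :=
  smoothTransition.contDiff.comp ((contDiff_id.sub contDiff_const).div_const _)

theorem differentiableAt_smoothStep : DifferentiableAt ℝ (smoothStep a b) x :=
  (contDiff_smoothStep (n := 1)).differentiable one_ne_zero x

theorem smoothStep_nonneg : 0 ≤ smoothStep a b x :=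
  smoothTransition.nonneg _

theorem smoothStep_le_one : smoothStep a b x ≤ 1 :=
  smoothTransition.le_one _

theorem monotone_smoothStep (hab : a ≤ b) : Monotone (smoothStep a b) := fun _ _ hxy =>
  smoothTransition.monotone <|
    div_le_div_of_nonneg_right (sub_le_sub_right hxy a) (sub_nonneg.2 hab)

theorem smoothStep_of_le (hab : a ≤ b) (hx : x ≤ a) : smoothStep a b x = 0 :=
  smoothTransition.zero_of_nonpos <|
    div_nonpos_of_nonpos_of_nonneg (sub_nonpos.2 hx) (sub_nonneg.2 hab)

theorem smoothStep_of_ge (hab : a < b) (hx : b ≤ x) : smoothStep a b x = 1 :=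
  smoothTransition.one_of_one_le <|
    (one_le_div (sub_pos.2 hab)).2 (sub_le_sub_right hx a)

theorem deriv_smoothStep_of_le (hab : a ≤ b) (hx : x ≤ a) : deriv (smoothStep a b) x = 0 := by
  have hmin : IsLocalMin (smoothStep a b) x :=
    .of_forall fun _ => (smoothStep_of_le hab hx).trans_le smoothStep_nonneg
  exact hmin.deriv_eq_zero

theorem deriv_smoothStep_of_ge (hab : a < b) (hx : b ≤ x) : deriv (smoothStep a b) x = 0 := by
  have hmax : IsLocalMax (smoothStep a b) x :=
    .of_forall fun _ => smoothStep_le_one.trans_eq (smoothStep_of_ge hab hx).symm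
  exact hmax.deriv_eq_zero

end SmoothStep

section LevelOff

variable {a b q x : ℝ}

/-- A smooth function that is the identity up to `a` and constant equal to `q` from `b` on, for
`a < b`. It is monotone when `b ≤ q`. -/
noncomputable def levelOff (a b q x : ℝ) : ℝ :=
  x + smoothStep a b x * (q - x)

theorem contDiff_levelOff {n : ℕ∞} : ContDiff ℝ n (levelOff a b q) :=
  contDiff_id.add (contDiff_smoothStep.mul (contDiff_const.sub contDiff_id))

theorem levelOff_of_le (hab : a ≤ b) (hx : x ≤ a) : levelOff a b q x = x := by
  simp [levelOff, smoothStep_of_le hab hx]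

theorem levelOff_of_ge (hab : a < b) (hx : b ≤ x) : levelOff a b q x = q := by
  simp [levelOff, smoothStep_of_ge hab hx]

theorem le_levelOff (haq : a ≤ q) (hx : a ≤ x) : a ≤ levelOff a b q x :=
  calc
    a = (1 - smoothStep a b x) * a + smoothStep a b x * a := by ring
    _ ≤ (1 - smoothStep a b x) * x + smoothStep a b x * q :=
      add_le_add (mul_le_mul_of_nonneg_left hx (sub_nonneg.2 smoothStep_le_one))
        (mul_le_mul_of_nonneg_left haq smoothStep_nonneg)
    _ = levelOff a b q x := by unfold levelOff; ring

theorem levelOff_le (hab : a < b) (hbq : b ≤ q) : levelOff a b q x ≤ q := by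
  rcases le_total b x with hbx | hxb
  · exact (levelOff_of_ge hab hbx).le
  · have hxq : 0 ≤ q - x := sub_nonneg.2 (hxb.trans hbq)
    have hstep := mul_le_mul_of_nonneg_right (smoothStep_le_one (a := a) (b := b) (x := x)) hxq
    unfold levelOff
    linarith

theorem deriv_levelOff :
    deriv (levelOff a b q) x = 1 - smoothStep a b x + deriv (smoothStep a b) x * (q - x) := by
  have hstep : HasDerivAt (smoothStep a b) (deriv (smoothStep a b) x) x :=
    differentiableAt_smoothStep.hasDerivAt
  have hlevel := (hasDerivAt_id x).add (hstep.mul ((hasDerivAt_id x).const_sub q))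
  refine hlevel.deriv.trans ?_
  simp only [id]
  ring

theorem deriv_levelOff_of_le (hab : a ≤ b) (hx : x ≤ a) : deriv (levelOff a b q) x = 1 := by
  simp [deriv_levelOff, smoothStep_of_le hab hx, deriv_smoothStep_of_le hab hx]

theorem one_sub_smoothStep_le_deriv_levelOff (hab : a < b) (hbq : b ≤ q) :
    1 - smoothStep a b x ≤ deriv (levelOff a b q) x := by
  rw [deriv_levelOff, le_add_iff_nonneg_right]
  rcases le_total b x with hbx | hxb
  · simp [deriv_smoothStep_of_ge hab hbx]
  · exact mul_nonneg (monotone_smoothStep hab.le).deriv_nonneg (sub_nonneg.2 (hxb.trans hbq))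

theorem levelOff_eq_or_deriv_pos (hab : a < b) (hbq : b ≤ q) :
    levelOff a b q x = q ∨ 0 < deriv (levelOff a b q) x := by
  rcases (smoothStep_le_one (a := a) (b := b) (x := x)).eq_or_lt with hone | hlt
  · exact .inl (by simp [levelOff, hone])
  · exact .inr ((sub_pos.2 hlt).trans_le (one_sub_smoothStep_le_deriv_levelOff hab hbq))

theorem deriv_levelOff_nonneg (hab : a < b) (hbq : b ≤ q) : 0 ≤ deriv (levelOff a b q) x :=
  (sub_nonneg.2 smoothStep_le_one).trans (one_sub_smoothStep_le_deriv_levelOff hab hbq)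

end LevelOff

section ContactDet

variable {h₁ h₂ ρ θ : ℝ → ℝ} {r : ℝ}

/-- The expression `h₁ h₂′ − h₂ h₁′`, whose non-vanishing for `r > 0` is the contact condition for
the form `h₁(r) dz + h₂(r) dφ` on the solid torus, with `z` the coordinate along the core. -/
noncomputable def contactDet (h₁ h₂ : ℝ → ℝ) (r : ℝ) : ℝ :=
  h₁ r * deriv h₂ r - h₂ r * deriv h₁ r

theorem contactDet_mul (hρ : DifferentiableAt ℝ ρ r) (hd₁ : DifferentiableAt ℝ h₁ r)
    (hd₂ : DifferentiableAt ℝ h₂ r) :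
    contactDet (fun x => ρ x * h₁ x) (fun x => ρ x * h₂ x) r = ρ r ^ 2 * contactDet h₁ h₂ r := by
  simp only [contactDet, deriv_fun_mul hρ hd₁, deriv_fun_mul hρ hd₂]
  ring

theorem contactDet_neg_cos_sq_mul_sin (hθ : DifferentiableAt ℝ θ r) :
    contactDet (fun x => -cos (θ x)) (fun x => x ^ 2 * sin (θ x)) r =
      -(r * (r * deriv θ r + sin (2 * θ r))) := by
  have hcos := hθ.hasDerivAt.cos.fun_neg.deriv
  have hsin := ((hasDerivAt_pow 2 r).fun_mul hθ.hasDerivAt.sin).deriv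
  rw [contactDet, hcos, hsin, sin_two_mul]
  linear_combination (-(r ^ 2 * deriv θ r)) * sin_sq_add_cos_sq (θ r)

theorem contactDet_polar_neg (hρ : DifferentiableAt ℝ ρ r) (hθ : DifferentiableAt ℝ θ r)
    (hρr : ρ r ≠ 0) (hr : 0 < r) (hrot : 0 < r * deriv θ r + sin (2 * θ r)) :
    contactDet (fun x => ρ x * -cos (θ x)) (fun x => ρ x * (x ^ 2 * sin (θ x))) r < 0 := by
  rw [contactDet_mul hρ (by fun_prop) (by fun_prop), contactDet_neg_cos_sq_mul_sin hθ]
  exact mul_neg_of_pos_of_neg (by positivity) (neg_neg_of_pos (mul_pos hr hrot))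

end ContactDet

theorem add_sin_two_mul_pos {t : ℝ} (ht : 0 < t) : 0 < t + sin (2 * t) := by
  rcases le_or_gt t (π / 2) with hle | hgt
  · have := sin_nonneg_of_nonneg_of_le_pi (x := 2 * t) (by linarith) (by linarith)
    linarith
  · linarith [neg_one_le_sin (2 * t), pi_gt_three]

theorem sin_two_mul_nonneg_of_mem_Icc {t : ℝ} (ht : t ∈ Set.Icc π (5 * π / 4)) :
    0 ≤ sin (2 * t) := by
  rw [← sin_sub_two_pi]
  exact sin_nonneg_of_nonneg_of_le_pi (by linarith [ht.1]) (by linarith [ht.2, pi_pos])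

theorem cos_five_pi_div_four : cos (5 * π / 4) = -(√2 / 2) := by
  rw [← cos_pi_div_four, ← cos_add_pi]
  ring_nf

theorem sin_five_pi_div_four : sin (5 * π / 4) = -(√2 / 2) := by
  rw [← sin_pi_div_four, ← sin_add_pi]
  ring_nf

section Twist

variable {R b r : ℝ}

/-- The angle `θ` of the twist: `πr/R` up to `R`, and `5π/4` from `b` on. -/
noncomputable def twistAngle (R b r : ℝ) : ℝ :=
  π / R * levelOff R b (5 / 4 * R) r

/-- The scaling factor `ρ` of the twist: `1` up to `R`, and `√2` from `b` on. -/
noncomputable def twistScale (R b r : ℝ) : ℝ :=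
  1 + (√2 - 1) * smoothStep R b r

/-- The coefficient `h₁` of the Lutz twist, with transition region `[R, b]`. -/
noncomputable def twistFst (R b r : ℝ) : ℝ :=
  twistScale R b r * -cos (twistAngle R b r)

/-- The coefficient `h₂` of the Lutz twist, with transition region `[R, b]`. -/
noncomputable def twistSnd (R b r : ℝ) : ℝ :=
  twistScale R b r * (r ^ 2 * sin (twistAngle R b r))

theorem contDiff_twistAngle {n : ℕ∞} : ContDiff ℝ n (twistAngle R b) :=
  contDiff_const.mul contDiff_levelOff

theorem contDiff_twistScale {n : ℕ∞} : ContDiff ℝ n (twistScale R b) :=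
  contDiff_const.add (contDiff_const.mul contDiff_smoothStep)

theorem contDiff_twistFst {n : ℕ∞} : ContDiff ℝ n (twistFst R b) :=
  contDiff_twistScale.mul contDiff_twistAngle.cos.neg

theorem contDiff_twistSnd {n : ℕ∞} : ContDiff ℝ n (twistSnd R b) :=
  contDiff_twistScale.mul ((contDiff_id.pow 2).mul contDiff_twistAngle.sin)

theorem twistScale_pos : 0 < twistScale R b r := by
  have hsqrt : 0 ≤ √2 - 1 := sub_nonneg.2 (one_le_sqrt.2 one_le_two)
  have hstep : 0 ≤ smoothStep R b r := smoothStep_nonneg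
  unfold twistScale
  positivity

theorem twistScale_of_le (hRb : R ≤ b) (hr : r ≤ R) : twistScale R b r = 1 := by
  simp [twistScale, smoothStep_of_le hRb hr]

theorem twistScale_of_ge (hRb : R < b) (hr : b ≤ r) : twistScale R b r = √2 := by
  simp [twistScale, smoothStep_of_ge hRb hr]

theorem twistAngle_of_le (hRb : R ≤ b) (hr : r ≤ R) : twistAngle R b r = π * r / R := by
  rw [twistAngle, levelOff_of_le hRb hr, div_mul_eq_mul_div]

theorem twistAngle_of_levelOff_eq (hR : R ≠ 0) (hr : levelOff R b (5 / 4 * R) r = 5 / 4 * R) :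
    twistAngle R b r = 5 * π / 4 := by
  rw [twistAngle, hr]
  field_simp

theorem twistAngle_mem_Icc (hR : 0 < R) (hRb : R < b) (hb : b ≤ 5 / 4 * R) (hr : R ≤ r) :
    twistAngle R b r ∈ Set.Icc π (5 * π / 4) := by
  have hπR : 0 ≤ π / R := by positivity
  constructor
  · calc
      π = π / R * R := by field_simp
      _ ≤ twistAngle R b r :=
        mul_le_mul_of_nonneg_left (le_levelOff (hRb.le.trans hb) hr) hπR
  · calc
      twistAngle R b r ≤ π / R * (5 / 4 * R) := mul_le_mul_of_nonneg_left (levelOff_le hRb hb) hπR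
      _ = 5 * π / 4 := by field_simp

theorem deriv_twistAngle :
    deriv (twistAngle R b) r = π / R * deriv (levelOff R b (5 / 4 * R)) r :=
  deriv_const_mul_field _

theorem mul_deriv_twistAngle_add_sin_pos (hR : 0 < R) (hRb : R < b) (hb : b ≤ 5 / 4 * R)
    (hr : 0 < r) : 0 < r * deriv (twistAngle R b) r + sin (2 * twistAngle R b r) := by
  rw [deriv_twistAngle]
  rcases le_total r R with hrR | hRr
  · rw [deriv_levelOff_of_le hRb.le hrR, twistAngle_of_le hRb.le hrR, mul_one,
      ← mul_div_assoc, mul_comm r π]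
    exact add_sin_two_mul_pos (by positivity)
  · rcases levelOff_eq_or_deriv_pos (x := r) hRb hb with hlevel | hderiv
    · have hsin : sin (2 * twistAngle R b r) = 1 := by
        rw [twistAngle_of_levelOff_eq hR.ne' hlevel, ← sin_pi_div_two,
          ← sin_add_two_pi (π / 2)]
        ring_nf
      have hderiv := deriv_levelOff_nonneg (x := r) hRb hb
      rw [hsin]
      positivity
    · exact add_pos_of_pos_of_nonneg (by positivity)
        (sin_two_mul_nonneg_of_mem_Icc (twistAngle_mem_Icc hR hRb hb hRr))

theorem twistFst_of_le (hRb : R ≤ b) (hr : r ≤ R) : twistFst R b r = -cos (π * r / R) := by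
  rw [twistFst, twistScale_of_le hRb hr, twistAngle_of_le hRb hr, one_mul]

theorem twistSnd_of_le (hRb : R ≤ b) (hr : r ≤ R) :
    twistSnd R b r = r ^ 2 * sin (π * r / R) := by
  rw [twistSnd, twistScale_of_le hRb hr, twistAngle_of_le hRb hr, one_mul]

theorem twistFst_of_ge (hR : R ≠ 0) (hRb : R < b) (hr : b ≤ r) : twistFst R b r = 1 := by
  rw [twistFst, twistScale_of_ge hRb hr, twistAngle_of_levelOff_eq hR (levelOff_of_ge hRb hr),
    cos_five_pi_div_four]
  linear_combination mul_self_sqrt zero_le_two / 2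

theorem twistSnd_of_ge (hR : R ≠ 0) (hRb : R < b) (hr : b ≤ r) : twistSnd R b r = -r ^ 2 := by
  rw [twistSnd, twistScale_of_ge hRb hr, twistAngle_of_levelOff_eq hR (levelOff_of_ge hRb hr),
    sin_five_pi_div_four]
  linear_combination (-r ^ 2 / 2) * mul_self_sqrt zero_le_two

theorem contactDet_twist_neg (hR : 0 < R) (hRb : R < b) (hb : b ≤ 5 / 4 * R) (hr : 0 < r) :
    contactDet (twistFst R b) (twistSnd R b) r < 0 :=
  contactDet_polar_neg ((contDiff_twistScale (n := 1)).differentiable one_ne_zero r)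
    ((contDiff_twistAngle (n := 1)).differentiable one_ne_zero r) twistScale_pos.ne' hr
    (mul_deriv_twistAngle_add_sin_pos hR hRb hb hr)

end Twist

/-- For every `0 < R < 1` there exist smooth functions `h₁, h₂ : ℝ → ℝ` with
`h₁(r) = −cos(πr/R)` and `h₂(r) = r² sin(πr/R)` on `[0, R]`, with `h₁(r) = 1` and
`h₂(r) = −r²` near `r = 1`, and satisfying the contact condition
`h₁ h₂′ − h₂ h₁′ ≠ 0` on `(0, 1]`.  (Such a pair realizes the Lutz twist of the standard
contact structure along the core of the solid torus, with overtwisted disks of radius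
`R` in the meridional disks.) -/
theorem lutz_twist_profile_exists (R : ℝ) (hR0 : 0 < R) (hR1 : R < 1) :
    ∃ h₁ h₂ : ℝ → ℝ,
      ContDiff ℝ (⊤ : ℕ∞) h₁ ∧ ContDiff ℝ (⊤ : ℕ∞) h₂ ∧
      -- (i) prescribed values on `[0, R]`
      (∀ r ∈ Set.Icc (0 : ℝ) R,
        h₁ r = -Real.cos (π * r / R) ∧ h₂ r = r ^ 2 * Real.sin (π * r / R)) ∧
      -- (ii) prescribed values near `r = 1`
      (∃ δ > 0, ∀ r ∈ Set.Ioc (1 - δ) (1 : ℝ), h₁ r = 1 ∧ h₂ r = -r ^ 2) ∧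
      -- (iii) the contact condition on `(0, 1]`
      (∀ r ∈ Set.Ioc (0 : ℝ) 1, h₁ r * deriv h₂ r - h₂ r * deriv h₁ r ≠ 0) := by
  obtain ⟨b, hRb, hb⟩ : ∃ b, R < b ∧ b < min 1 (5 / 4 * R) :=
    exists_between (lt_min hR1 (by linarith))
  obtain ⟨hb1, hbR⟩ := lt_min_iff.1 hb
  refine ⟨twistFst R b, twistSnd R b, contDiff_twistFst, contDiff_twistSnd,
    fun r hr => ⟨twistFst_of_le hRb.le hr.2, twistSnd_of_le hRb.le hr.2⟩,
    ⟨1 - b, sub_pos.2 hb1, fun r hr => ?_⟩,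
    fun r hr => (contactDet_twist_neg hR0 hRb hbR.le hr.1).ne⟩
  have hbr : b ≤ r := by linarith [hr.1]
  exact ⟨twistFst_of_ge hR0.ne' hRb hbr, twistSnd_of_ge hR0.ne' hRb hbr⟩
end

section
/- Fix R > 0 and define h₁(r) = −cos(πr/R) and h₂(r) = r²·sin(πr/R) for r ∈ ℝ. Then for every r with 0 < r ≤ R one has h₁(r)·h₂′(r) − h₂(r)·h₁′(r) = −r·(sin(2πr/R) + πr/R), and this quantity is strictly negative; in particular h₁·h₂′ − h₂·h₁′ ≠ 0 on (0, R], so the 1-form h₁(r) dθ + h₂(r) dφ satisfies the contact condition there. -/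
open Real

/-- The first Lutz-twist profile function `h₁(r) = −cos(πr/R)`. -/
noncomputable def lutzH₁ (R r : ℝ) : ℝ := -Real.cos (π * r / R)

/-- The second Lutz-twist profile function `h₂(r) = r² sin(πr/R)`. -/
noncomputable def lutzH₂ (R r : ℝ) : ℝ := r ^ 2 * Real.sin (π * r / R)

/-!
With `x = πr/R`, the double-angle formula turns `h₁ h₂′ − h₂ h₁′` into `−r (sin 2x + x)`, so the
sign is decided by comparing `sin 2x` with `x`. As long as `|2x| ≤ π`, the two do not have opposite
signs; once `|2x| > π`, one has `|x| > 1 ≥ |sin 2x|`. Hence `sin 2x + x` always has the sign of `x`.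
-/

theorem sin_mul_add_self_pos {c x : ℝ} (hc₀ : 0 ≤ c) (hcπ : c ≤ π) (hx : 0 < x) :
    0 < sin (c * x) + x := by
  rcases le_or_gt (c * x) π with first_arch | past_first_arch
  · exact add_pos_of_nonneg_of_pos
      (sin_nonneg_of_nonneg_of_le_pi (mul_nonneg hc₀ hx.le) first_arch) hx
  · have one_lt_x : 1 < x := by
      by_contra! hx₁
      exact past_first_arch.not_ge ((mul_le_of_le_one_right hc₀ hx₁).trans hcπ)
    linarith [neg_one_le_sin (c * x)]

theorem self_mul_sin_mul_add_self_pos {c x : ℝ} (hc₀ : 0 ≤ c) (hcπ : c ≤ π) (hx : x ≠ 0) :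
    0 < x * (sin (c * x) + x) := by
  rcases hx.lt_or_gt with x_neg | x_pos
  · have reflected : 0 < sin (c * -x) + -x := sin_mul_add_self_pos hc₀ hcπ (neg_pos.mpr x_neg)
    rw [mul_neg, sin_neg] at reflected
    exact mul_pos_of_neg_of_neg x_neg (by linarith)
  · exact mul_pos x_pos (sin_mul_add_self_pos hc₀ hcπ x_pos)

theorem hasDerivAt_const_mul_div_const {𝕜 : Type*} [NontriviallyNormedField 𝕜] (a b x : 𝕜) :
    HasDerivAt (fun y ↦ a * y / b) (a / b) x := by
  simpa using ((hasDerivAt_id x).const_mul a).div_const b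

section LutzProfile

variable (R r : ℝ)

theorem hasDerivAt_lutzH₁ : HasDerivAt (lutzH₁ R) (sin (π * r / R) * (π / R)) r :=
  (hasDerivAt_const_mul_div_const π R r).cos.fun_neg.congr_deriv (by ring)

theorem hasDerivAt_lutzH₂ :
    HasDerivAt (lutzH₂ R)
      (2 * r * sin (π * r / R) + r ^ 2 * (cos (π * r / R) * (π / R))) r :=
  ((hasDerivAt_pow 2 r).fun_mul (hasDerivAt_const_mul_div_const π R r).sin).congr_deriv
    (by norm_num)

theorem lutzH₁_mul_deriv_sub_lutzH₂_mul_deriv :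
    lutzH₁ R r * deriv (lutzH₂ R) r - lutzH₂ R r * deriv (lutzH₁ R) r
      = -r * (sin (2 * π * r / R) + π * r / R) := by
  have double_angle :
      sin (2 * π * r / R) = 2 * sin (π * r / R) * cos (π * r / R) := by
    rw [← sin_two_mul]
    ring_nf
  rw [(hasDerivAt_lutzH₁ R r).deriv, (hasDerivAt_lutzH₂ R r).deriv, double_angle, lutzH₁, lutzH₂]
  linear_combination -(r ^ 2 * (π / R)) * sin_sq_add_cos_sq (π * r / R)

end LutzProfile

theorem neg_mul_sin_add_pi_mul_div_neg {R r : ℝ} (hR : 0 < R) (hr : r ≠ 0) :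
    -r * (sin (2 * π * r / R) + π * r / R) < 0 := by
  have angle_ne_zero : π * r / R ≠ 0 := div_ne_zero (mul_ne_zero pi_ne_zero hr) hR.ne'
  have rescale :
      -r * (sin (2 * π * r / R) + π * r / R)
        = -(R / π * (π * r / R * (sin (2 * (π * r / R)) + π * r / R))) := by
    field_simp
  rw [rescale, neg_lt_zero]
  exact mul_pos (div_pos hR pi_pos)
    (self_mul_sin_mul_add_self_pos zero_le_two two_le_pi angle_ne_zero)

theorem lutz_twist_contact_condition_general {R r : ℝ} (hR : 0 < R) (hr : r ≠ 0) :
    lutzH₁ R r * deriv (lutzH₂ R) r - lutzH₂ R r * deriv (lutzH₁ R) r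
      = -r * (sin (2 * π * r / R) + π * r / R) ∧
    lutzH₁ R r * deriv (lutzH₂ R) r - lutzH₂ R r * deriv (lutzH₁ R) r < 0 ∧
    lutzH₁ R r * deriv (lutzH₂ R) r - lutzH₂ R r * deriv (lutzH₁ R) r ≠ 0 := by
  rw [lutzH₁_mul_deriv_sub_lutzH₂_mul_deriv]
  have wronskian_neg := neg_mul_sin_add_pi_mul_div_neg hR hr
  exact ⟨rfl, wronskian_neg, wronskian_neg.ne⟩

/-- For `h₁(r) = −cos(πr/R)` and `h₂(r) = r² sin(πr/R)` one has, for `0 < r ≤ R`,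
`h₁ h₂′ − h₂ h₁′ = −r (sin(2πr/R) + πr/R)`, and this quantity is strictly negative; in
particular `h₁ h₂′ − h₂ h₁′ ≠ 0` on `(0, R]`, so the 1-form `h₁ dθ + h₂ dφ` satisfies
the contact condition there. -/
theorem lutz_twist_contact_condition (R : ℝ) (hR : 0 < R)
    (r : ℝ) (hr0 : 0 < r) (hrR : r ≤ R) :
    lutzH₁ R r * deriv (lutzH₂ R) r - lutzH₂ R r * deriv (lutzH₁ R) r
      = -r * (Real.sin (2 * π * r / R) + π * r / R) ∧
    lutzH₁ R r * deriv (lutzH₂ R) r - lutzH₂ R r * deriv (lutzH₁ R) r < 0 ∧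
    lutzH₁ R r * deriv (lutzH₂ R) r - lutzH₂ R r * deriv (lutzH₁ R) r ≠ 0 :=
  lutz_twist_contact_condition_general hR hr0.ne'
end

section
/- For t₁ > 0, t₂ > 0 with t₁ + t₂ < 1, let u(t₁,t₂) = (t₁, t₂, 1−t₁−t₂, 0) ∈ ℝ⁴ and σ(t₁,t₂) = u(t₁,t₂)/‖u(t₁,t₂)‖, a parametrization of the interior of the spherical 2-face Δ = u₁v₁w₁ of the triangulation (the radial projection to S³ of the 2-simplex with vertices e₁, e₂, e₃). Then for all such (t₁,t₂) the partial derivative ∂σ/∂t₁ exists and β_{σ(t₁,t₂)}(∂σ/∂t₁(t₁,t₂)) = (1 − t₂)/‖u(t₁,t₂)‖² > 0. In particular, at every interior point p of Δ the tangent plane T_pΔ is not contained in ker β_p, so T_pΔ ≠ ξ_p and Δ is nowhere tangent to the contact structure (hence Δ is not an overtwisted disk). -/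
/-- The point `(a, b, c, d)` of Euclidean 4-space, with coordinates `(x₁, y₁, x₂, y₂)`. -/
noncomputable def pt4 (a b c d : ℝ) : EuclideanSpace ℝ (Fin 4) :=
  (WithLp.equiv 2 (Fin 4 → ℝ)).symm ![a, b, c, d]

/-- The 1-form `β = x₂ dx₁ + y₂ dy₁ − x₁ dx₂ − y₁ dy₂` on `ℝ⁴`, evaluated at the point `p`
on the tangent vector `v`:  `β_p(v) = p₃v₁ + p₄v₂ − p₁v₃ − p₂v₄`. -/
noncomputable def betaForm (p v : EuclideanSpace ℝ (Fin 4)) : ℝ :=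
  p 2 * v 0 + p 3 * v 1 - p 0 * v 2 - p 1 * v 3

/-- `u(t₁,t₂) = (t₁, t₂, 1 − t₁ − t₂, 0)`. -/
noncomputable def faceU (t₁ t₂ : ℝ) : EuclideanSpace ℝ (Fin 4) :=
  pt4 t₁ t₂ (1 - t₁ - t₂) 0

/-- `σ(t₁,t₂) = u(t₁,t₂)/‖u(t₁,t₂)‖`, parametrizing the interior of the spherical 2-face
`Δ = u₁v₁w₁` (the radial projection to `S³` of the 2-simplex with vertices `e₁,e₂,e₃`). -/
noncomputable def faceσ (t₁ t₂ : ℝ) : EuclideanSpace ℝ (Fin 4) :=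
  ‖faceU t₁ t₂‖⁻¹ • faceU t₁ t₂

/-!
The form `β` is alternating bilinear in `(p, v)`. Differentiating the radial projection `u / ‖u‖`
gives `‖u‖⁻¹ ∂u` plus a multiple of `u`; the latter pairs to zero with `u`, so
`β(σ, ∂σ) = β(u, ∂u) / ‖u‖²`, and for the affine map `u` one has `β(u, ∂u/∂t₁) = 1 - t₂`.
-/

section InnerProductSpace

open scoped RealInnerProductSpace

variable {E : Type*} [NormedAddCommGroup E] [InnerProductSpace ℝ E]
  {γ : ℝ → E} {γ' : E} {t : ℝ}

theorem hasDerivAt_norm (hγ : HasDerivAt γ γ' t) (h0 : γ t ≠ 0) :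
    HasDerivAt (fun s => ‖γ s‖) (⟪γ t, γ'⟫ / ‖γ t‖) t := by
  have hsqrt := hγ.norm_sq.sqrt (pow_ne_zero 2 (norm_ne_zero_iff.mpr h0))
  simp only [Real.sqrt_sq (norm_nonneg _)] at hsqrt
  rwa [mul_div_mul_left _ _ two_ne_zero] at hsqrt

theorem hasDerivAt_normalize (hγ : HasDerivAt γ γ' t) (h0 : γ t ≠ 0) :
    HasDerivAt (fun s => NormedSpace.normalize (γ s))
      (‖γ t‖⁻¹ • γ' + (-(⟪γ t, γ'⟫ / ‖γ t‖ ^ 3)) • γ t) t := by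
  have hinv := (hasDerivAt_norm hγ h0).fun_inv (norm_ne_zero_iff.mpr h0)
  rw [neg_div, div_div, ← pow_succ'] at hinv
  exact hinv.fun_smul hγ

end InnerProductSpace

theorem betaForm_self (p : EuclideanSpace ℝ (Fin 4)) : betaForm p p = 0 := by
  unfold betaForm
  ring

theorem betaForm_smul_left (a : ℝ) (p v : EuclideanSpace ℝ (Fin 4)) :
    betaForm (a • p) v = a * betaForm p v := by
  simp only [betaForm, PiLp.smul_apply, smul_eq_mul]
  ring

theorem betaForm_smul_right (a : ℝ) (p v : EuclideanSpace ℝ (Fin 4)) :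
    betaForm p (a • v) = a * betaForm p v := by
  simp only [betaForm, PiLp.smul_apply, smul_eq_mul]
  ring

theorem betaForm_add_right (p v w : EuclideanSpace ℝ (Fin 4)) :
    betaForm p (v + w) = betaForm p v + betaForm p w := by
  simp only [betaForm, PiLp.add_apply]
  ring

theorem betaForm_smul_smul_add_smul_self (a b : ℝ) (p v : EuclideanSpace ℝ (Fin 4)) :
    betaForm (a • p) (a • v + b • p) = a ^ 2 * betaForm p v := by
  rw [betaForm_smul_left, betaForm_add_right, betaForm_smul_right, betaForm_smul_right,
    betaForm_self]
  ring

theorem exists_hasDerivAt_normalize_betaForm_eq {γ : ℝ → EuclideanSpace ℝ (Fin 4)}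
    {γ' : EuclideanSpace ℝ (Fin 4)} {t : ℝ} (hγ : HasDerivAt γ γ' t) (h0 : γ t ≠ 0) :
    ∃ D, HasDerivAt (fun s => NormedSpace.normalize (γ s)) D t ∧
      betaForm (NormedSpace.normalize (γ t)) D = betaForm (γ t) γ' / ‖γ t‖ ^ 2 := by
  refine ⟨_, hasDerivAt_normalize hγ h0, ?_⟩
  rw [NormedSpace.normalize, betaForm_smul_smul_add_smul_self, inv_pow, inv_mul_eq_div]

theorem faceU_eq_add_smul (t₁ t₂ : ℝ) :
    faceU t₁ t₂ = pt4 0 t₂ (1 - t₂) 0 + t₁ • pt4 1 0 (-1) 0 := by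
  ext i
  fin_cases i <;> simp [faceU, pt4, sub_right_comm 1 t₁ t₂, ← sub_eq_add_neg]

theorem hasDerivAt_faceU_left (t₁ t₂ : ℝ) :
    HasDerivAt (fun s => faceU s t₂) (pt4 1 0 (-1) 0) t₁ := by
  simp only [faceU_eq_add_smul]
  simpa only [one_smul] using
    ((hasDerivAt_id' t₁).smul_const (pt4 1 0 (-1) 0)).const_add (pt4 0 t₂ (1 - t₂) 0)

theorem betaForm_faceU_pt4 (t₁ t₂ : ℝ) :
    betaForm (faceU t₁ t₂) (pt4 1 0 (-1) 0) = 1 - t₂ := by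
  simp [betaForm, faceU, pt4, sub_right_comm 1 t₁ t₂]

theorem sum_faceU (t₁ t₂ : ℝ) : ∑ i, faceU t₁ t₂ i = 1 := by
  simp [Fin.sum_univ_four, faceU, pt4]

theorem faceU_ne_zero (t₁ t₂ : ℝ) : faceU t₁ t₂ ≠ 0 := by
  intro h
  simpa [h] using sum_faceU t₁ t₂

theorem face_not_tangent_general (t₁ t₂ : ℝ) (h : t₂ < 1) :
    ∃ D : EuclideanSpace ℝ (Fin 4),
      HasDerivAt (fun s => faceσ s t₂) D t₁ ∧
      betaForm (faceσ t₁ t₂) D = (1 - t₂) / ‖faceU t₁ t₂‖ ^ 2 ∧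
      0 < (1 - t₂) / ‖faceU t₁ t₂‖ ^ 2 := by
  have hu : faceU t₁ t₂ ≠ 0 := faceU_ne_zero t₁ t₂
  obtain ⟨D, hD, hβ⟩ := exists_hasDerivAt_normalize_betaForm_eq (hasDerivAt_faceU_left t₁ t₂) hu
  rw [betaForm_faceU_pt4] at hβ
  exact ⟨D, hD, hβ, div_pos (sub_pos.mpr h) (pow_pos (norm_pos_iff.mpr hu) 2)⟩

/-- For `t₁, t₂ > 0` with `t₁ + t₂ < 1`, the partial derivative `∂σ/∂t₁` exists and
`β_{σ(t₁,t₂)}(∂σ/∂t₁(t₁,t₂)) = (1 − t₂)/‖u(t₁,t₂)‖² > 0`.  In particular, at every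
interior point `p` of the spherical face `Δ` the tangent plane `T_pΔ` is not contained in
`ker β_p`, so `T_pΔ ≠ ξ_p` and `Δ` is nowhere tangent to the contact structure (hence `Δ`
is not an overtwisted disk). -/
theorem face_not_tangent (t₁ t₂ : ℝ) (h₁ : 0 < t₁) (h₂ : 0 < t₂) (h₃ : t₁ + t₂ < 1) :
    ∃ D : EuclideanSpace ℝ (Fin 4),
      HasDerivAt (fun s => faceσ s t₂) D t₁ ∧
      betaForm (faceσ t₁ t₂) D = (1 - t₂) / ‖faceU t₁ t₂‖ ^ 2 ∧
      0 < (1 - t₂) / ‖faceU t₁ t₂‖ ^ 2 :=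
  face_not_tangent_general t₁ t₂ (by linarith)
end
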